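/- arXiv:1111.4655 — 2 statements merged into one kernel-verified Lean document; each statement's English description precedes it below -/
import Mathlib

section
/- Let T > 2π, a = T/(2π) − 1 > 0, b = √2, and B = (b/a)². For each integer n ≥ 1 let τ_n be the unique t > B with a·t − b·√t = n, and define m(z) = ∏_{n≥1} (1 − (z−i)²/τ_n²), an absolutely convergent product (since τ_n ∼ n/a). Then m is an entire function of exponential type at most aπ, and there exists C > 0 such that: (a) |m(x)| ≤ C(1 + |x|) e^{−√2·π·√|x|} for every x ∈ ℝ; (b) |m(iλ_k^+)| ≥ C^{−1} |k|^{−3} e^{−√2·π·√|k|} for every k ∈ ℤ∖{0}; (c) |m(iλ_k^-)| ≥ C^{−1} e^{aπk² − 2√2·π|k|} for every k ∈ ℤ∖{0}. -/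
open Real

/-- The hyperbolic eigenvalue branch `λ_k⁺ = (-(k² - 2ik) + √(k⁴ - 4k²))/2`, with the
principal complex square root. -/
noncomputable def lamP (k : ℤ) : ℂ :=
  (-((k:ℂ)^2 - 2*Complex.I*(k:ℂ)) + ((k:ℂ)^4 - 4*(k:ℂ)^2) ^ ((1:ℂ)/2)) / 2

/-- The parabolic eigenvalue branch `λ_k⁻ = (-(k² - 2ik) - √(k⁴ - 4k²))/2`, with the
principal complex square root. -/
noncomputable def lamM (k : ℤ) : ℂ :=
  (-((k:ℂ)^2 - 2*Complex.I*(k:ℂ)) - ((k:ℂ)^4 - 4*(k:ℂ)^2) ^ ((1:ℂ)/2)) / 2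

/-!
Write `m z = P (z - i)` with `P` the even product over `± τ_n`, and `ν t = a t - b √t`, so that
`ν (τ_n) = n`. Let `Φ` be the primitive of `g t = log |1 - w² / t²|` against `dν`. It is explicit in
terms of `Re (z log z)`, tends to `0` at infinity, and `-Φ 0 = a π |Im w| - b π √(|w| + |Im w|)` is
the expected size of `log |P w|`.

By Cauchy's mean value theorem `Φ (τ_{n+1}) - Φ (τ_n) = g (ξ_n)` with `τ_n < ξ_n < τ_{n+1}`. As `g`
is quasiconvex, sums of `g` over interlacing sequences differ by at most a boundary term, which is
controlled by a lower bound `μ` for `g`; hence `log |P w| = ∑ g (τ_n)` equals `-Φ 0` up to `μ` and a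
multiple of `log |w|`. On horizontal strips `exp μ` is of order `|Im w| / |Re w|`; where
`Re (w²) ≤ 0` one can take `μ = 0`. Shifted by `-i`, the real axis and the points `i λ_k⁺` lie in
such strips, and the points `i λ_k⁻` near the parabola `Im w = -(Re w)²`.
-/

section

open Asymptotics Bornology Complex ComplexConjugate Filter Set Topology

/-- The real part of `z log z`. Its derivative along a horizontal line is `log ‖z‖ + 1`, so its
second differences are primitives of logarithmic potentials. -/
noncomputable def reMulLog (z : ℂ) : ℝ :=
  (z * log z).re

theorem ofReal_add_ne_zero {ρ : ℂ} (hρ : ρ.im ≠ 0) (v : ℝ) : (v : ℂ) + ρ ≠ 0 :=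
  fun h => hρ (by simpa using congrArg im h)

theorem hasDerivAt_reMulLog_ofReal_add {ρ : ℂ} (hρ : ρ.im ≠ 0) (v : ℝ) :
    HasDerivAt (fun v : ℝ => reMulLog (v + ρ)) (Real.log ‖(v : ℂ) + ρ‖ + 1) v := by
  have hslit : (v : ℂ) + ρ ∈ slitPlane := Or.inr (by simpa using hρ)
  have hshift : HasDerivAt (fun z : ℂ => z + ρ) 1 (v : ℂ) := (hasDerivAt_id _).add_const ρ
  refine (hshift.mul (hshift.clog hslit)).real_of_complex.congr_deriv ?_
  rw [mul_one_div_cancel (slitPlane_ne_zero hslit), one_mul, add_re, log_re, one_re]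

theorem tendsto_reMulLog_ofReal_add (ρ : ℂ) :
    Tendsto (fun v : ℝ => reMulLog (v + ρ) - (v + ρ.re) * Real.log v) atTop (𝓝 ρ.re) := by
  have hcancel : ∀ᶠ v : ℝ in atTop, (v : ℂ) * (ρ / v) = ρ := by
    filter_upwards [eventually_ne_atTop 0] with v hv
    exact mul_div_cancel₀ ρ (ofReal_ne_zero.2 hv)
  have hdiv : Tendsto (fun v : ℝ => 1 + ρ / v) atTop (𝓝 1) := by
    have hinv := (continuous_ofReal.tendsto 0).comp tendsto_inv_atTop_zero
    simpa [Function.comp_def, div_eq_mul_inv] using (hinv.const_mul ρ).const_add 1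
  have hlog : Tendsto (fun v : ℝ => log (1 + ρ / v)) atTop (𝓝 0) := by
    simpa using hdiv.clog one_mem_slitPlane
  have hmul : Tendsto (fun v : ℝ => v * log (1 + ρ / v)) atTop (𝓝 ρ) :=
    tendsto_mul_log_one_add_of_tendsto (tendsto_const_nhds.congr' (hcancel.mono fun _ h => h.symm))
  have hlim := (continuous_re.tendsto _).comp (hmul.add (hlog.const_mul ρ))
  simp only [mul_zero, add_zero] at hlim
  refine hlim.congr' ?_
  filter_upwards [hcancel, eventually_gt_atTop 0, hdiv.eventually_ne one_ne_zero] with v hv hpos hne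
  have hsplit : log (v + ρ) = Real.log v + log (1 + ρ / v) := by
    rw [← log_ofReal_mul hpos hne, mul_add, mul_one, hv]
  simp only [Function.comp_apply, reMulLog, hsplit, mul_re, add_re, add_im, ofReal_re, ofReal_im]
  ring

/-- A primitive on `v > 0` of the potential `v ↦ log ‖1 - ρ² / v²‖`: the second difference of
`Re (z log z)` with step `ρ`. -/
noncomputable def logPrimitive (ρ : ℂ) (v : ℝ) : ℝ :=
  reMulLog (v + ρ) + reMulLog (v - ρ) - 2 * (v * Real.log v)

theorem hasDerivAt_reMulLog_add_reMulLog_sub {ρ : ℂ} (hρ : ρ.im ≠ 0) (v : ℝ) :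
    HasDerivAt (fun v : ℝ => reMulLog (v + ρ) + reMulLog (v - ρ))
      (Real.log ‖(v : ℂ) ^ 2 - ρ ^ 2‖ + 2) v := by
  have hneg : (-ρ).im ≠ 0 := by simpa using hρ
  simp only [sub_eq_add_neg (_ : ℂ) ρ]
  refine ((hasDerivAt_reMulLog_ofReal_add hρ v).add
    (hasDerivAt_reMulLog_ofReal_add hneg v)).congr_deriv ?_
  rw [sq_sub_sq, norm_mul, sub_eq_add_neg (v : ℂ) ρ, Real.log_mul
    (norm_ne_zero_iff.2 (ofReal_add_ne_zero hρ v)) (norm_ne_zero_iff.2 (ofReal_add_ne_zero hneg v))]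
  ring

theorem one_sub_sq_div_sq {K : Type*} [Field K] {v : K} (hv : v ≠ 0) (ρ : K) :
    1 - ρ ^ 2 / v ^ 2 = (v + ρ) * (v - ρ) / v ^ 2 := by
  rw [← sq_sub_sq, sub_div, div_self (pow_ne_zero 2 hv)]

theorem one_sub_sq_div_ofReal_sq_ne_zero {ρ : ℂ} (hρ : ρ.im ≠ 0) (v : ℝ) :
    1 - ρ ^ 2 / (v : ℂ) ^ 2 ≠ 0 := by
  rcases eq_or_ne v 0 with rfl | hv
  · simp
  · have hv' : (v : ℂ) ≠ 0 := ofReal_ne_zero.2 hv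
    have hsub : (v : ℂ) - ρ ≠ 0 := sub_eq_add_neg (v : ℂ) ρ ▸
      ofReal_add_ne_zero (ρ := -ρ) (by simpa using hρ) v
    rw [one_sub_sq_div_sq hv']
    exact div_ne_zero (mul_ne_zero (ofReal_add_ne_zero hρ v) hsub) (pow_ne_zero 2 hv')

theorem hasDerivAt_logPrimitive {ρ : ℂ} (hρ : ρ.im ≠ 0) {v : ℝ} (hv : 0 < v) :
    HasDerivAt (logPrimitive ρ) (Real.log ‖1 - ρ ^ 2 / (v : ℂ) ^ 2‖) v := by
  refine ((hasDerivAt_reMulLog_add_reMulLog_sub hρ v).sub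
    ((Real.hasDerivAt_mul_log hv.ne').const_mul 2)).congr_deriv ?_
  have hv' : (v : ℂ) ≠ 0 := ofReal_ne_zero.2 hv.ne'
  have hne := one_sub_sq_div_ofReal_sq_ne_zero hρ v
  rw [one_sub_sq_div_sq hv', ← sq_sub_sq] at hne ⊢
  rw [norm_div, Real.log_div (norm_ne_zero_iff.2 (div_ne_zero_iff.1 hne).1)
    (norm_ne_zero_iff.2 (div_ne_zero_iff.1 hne).2), norm_pow, norm_real, Real.log_pow,
    Real.norm_of_nonneg hv.le]
  push_cast
  ring

theorem logPrimitive_zero {ρ : ℂ} (hρ : ρ.im ≠ 0) : logPrimitive ρ 0 = -(π * |ρ.im|) := by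
  have hsum : logPrimitive ρ 0 = ρ.im * (arg (-ρ) - arg ρ) := by
    simp only [logPrimitive, reMulLog, ofReal_zero, zero_add, zero_sub, mul_re, log_re, log_im,
      norm_neg, neg_re, neg_im]
    ring
  rcases hρ.lt_or_gt with h | h
  · rw [hsum, arg_neg_eq_arg_add_pi_of_im_neg h, abs_of_neg h]
    ring
  · rw [hsum, arg_neg_eq_arg_sub_pi_of_im_pos h, abs_of_pos h]
    ring

theorem tendsto_logPrimitive_atTop (ρ : ℂ) : Tendsto (logPrimitive ρ) atTop (𝓝 0) := by
  have h := (tendsto_reMulLog_ofReal_add ρ).add (tendsto_reMulLog_ofReal_add (-ρ))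
  rw [neg_re, add_neg_cancel] at h
  refine h.congr fun v => ?_
  rw [logPrimitive, sub_eq_add_neg (v : ℂ) ρ]
  ring

theorem abs_log_norm_sq_sub_sq_le {z ρ : ℂ} (hz : 2 * ‖z‖ ≤ ‖ρ‖) :
    |Real.log ‖z ^ 2 - ρ ^ 2‖ - 2 * Real.log ‖ρ‖| ≤ 2 := by
  rcases eq_or_ne ρ 0 with rfl | hρ
  · obtain rfl : z = 0 := norm_le_zero_iff.1 (by rw [norm_zero] at hz; linarith)
    simp
  have hpos : 0 < ‖ρ‖ ^ 2 := by positivity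
  have hz2 : ‖z‖ ^ 2 ≤ ‖ρ‖ ^ 2 / 4 := by nlinarith [norm_nonneg z]
  have hlower : 3 / 4 * ‖ρ‖ ^ 2 ≤ ‖z ^ 2 - ρ ^ 2‖ := by
    have := norm_sub_norm_le (ρ ^ 2) (z ^ 2)
    rw [norm_sub_rev, norm_pow, norm_pow] at this
    linarith
  have hupper : ‖z ^ 2 - ρ ^ 2‖ ≤ 5 / 4 * ‖ρ‖ ^ 2 := by
    have := norm_sub_le (z ^ 2) (ρ ^ 2)
    rw [norm_pow, norm_pow] at this
    linarith
  have hlogl := Real.log_le_log (by positivity) hlower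
  have hlogu := Real.log_le_log (hlower.trans_lt' (by positivity)) hupper
  rw [Real.log_mul (by norm_num) hpos.ne', Real.log_pow, Nat.cast_ofNat] at hlogl hlogu
  have hlog_three := Real.one_sub_inv_le_log_of_pos (show (0 : ℝ) < 3 / 4 by norm_num)
  have hlog_five := Real.log_le_sub_one_of_pos (show (0 : ℝ) < 5 / 4 by norm_num)
  rw [abs_le]
  constructor <;> linarith

theorem abs_logPrimitive_sub_le {ρ : ℂ} (hρ : ρ.im ≠ 0) {v : ℝ} (hv : 0 ≤ v)
    (hvρ : 2 * v ≤ ‖ρ‖) :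
    |logPrimitive ρ v - logPrimitive ρ 0 - 2 * v * Real.log ‖ρ‖|
      ≤ 4 * v + 2 * |v * Real.log v| := by
  let f : ℝ → ℝ := fun v => reMulLog (v + ρ) + reMulLog (v - ρ) - v * (2 * Real.log ‖ρ‖)
  have hderiv (x : ℝ) :
      HasDerivAt f (Real.log ‖(x : ℂ) ^ 2 - ρ ^ 2‖ + 2 - 1 * (2 * Real.log ‖ρ‖)) x :=
    (hasDerivAt_reMulLog_add_reMulLog_sub hρ x).sub ((hasDerivAt_id x).mul_const _)
  have hbound : ∀ x ∈ Ico 0 v,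
      ‖Real.log ‖(x : ℂ) ^ 2 - ρ ^ 2‖ + 2 - 1 * (2 * Real.log ‖ρ‖)‖ ≤ 4 := by
    intro x hx
    have hxρ : 2 * ‖(x : ℂ)‖ ≤ ‖ρ‖ := by
      rw [norm_real, Real.norm_of_nonneg hx.1]
      linarith [hx.2]
    have := abs_le.1 (abs_log_norm_sq_sub_sq_le hxρ)
    rw [Real.norm_eq_abs, abs_le]
    constructor <;> linarith
  have hmean := norm_image_sub_le_of_norm_deriv_le_segment'
    (fun x _ => (hderiv x).hasDerivWithinAt) hbound v ⟨hv, le_rfl⟩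
  calc |logPrimitive ρ v - logPrimitive ρ 0 - 2 * v * Real.log ‖ρ‖|
      = |(f v - f 0) - 2 * (v * Real.log v)| := by
        congr 1
        simp only [logPrimitive, f, ofReal_zero]
        ring
    _ ≤ |f v - f 0| + |2 * (v * Real.log v)| := abs_sub _ _
    _ ≤ 4 * v + 2 * |v * Real.log v| := by
        rw [abs_mul 2, abs_two, ← Real.norm_eq_abs (f v - f 0)]
        linarith

theorem abs_im_div_norm_le_norm_one_sub_div (z : ℂ) (t : ℝ) :
    |z.im| / ‖z‖ ≤ ‖1 - z / (t : ℂ) ^ 2‖ := by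
  have hmul : (1 - z / (t : ℂ) ^ 2) * conj z = conj z - ((‖z‖ ^ 2 / t ^ 2 : ℝ) : ℂ) := by
    push_cast
    rw [← mul_conj']
    ring
  refine div_le_of_le_mul₀ (norm_nonneg _) (norm_nonneg _) ?_
  rw [← norm_conj z, ← norm_mul, hmul]
  simpa only [sub_im, conj_im, ofReal_im, sub_zero, abs_neg] using
    abs_im_le_norm (conj z - ((‖z‖ ^ 2 / t ^ 2 : ℝ) : ℂ))

theorem one_le_norm_one_sub_div {z : ℂ} (hz : z.re ≤ 0) (t : ℝ) :
    1 ≤ ‖1 - z / (t : ℂ) ^ 2‖ := by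
  have hre : (1 - z / (t : ℂ) ^ 2).re = 1 - z.re / t ^ 2 := by
    rw [sub_re, one_re, ← ofReal_pow, div_ofReal_re]
  have := div_nonpos_of_nonpos_of_nonneg hz (sq_nonneg t)
  exact le_trans (by rw [hre]; linarith) (re_le_norm _)

theorem convexOn_norm_one_sub_smul (z : ℂ) : ConvexOn ℝ univ fun u : ℝ => ‖1 - u • z‖ := by
  refine ((convexOn_univ_norm (E := ℂ)).comp_affineMap
    (AffineMap.lineMap (k := ℝ) 1 (1 - z))).congr fun u _ => ?_
  rw [Function.comp_apply, AffineMap.lineMap_apply_module', sub_sub_cancel_left, smul_neg,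
    neg_add_eq_sub]

theorem quasiconvexOn_log_norm_one_sub_sq_div_sq {w : ℂ} (hw : w.im ≠ 0) :
    QuasiconvexOn ℝ (Ioi 0) fun t : ℝ => Real.log ‖1 - w ^ 2 / (t : ℂ) ^ 2‖ := by
  have hsmul (t : ℝ) : w ^ 2 / (t : ℂ) ^ 2 = (t ^ 2)⁻¹ • w ^ 2 := by
    rw [real_smul, ofReal_inv, ofReal_pow, mul_comm, div_eq_mul_inv]
  intro r
  refine OrdConnected.convex ⟨fun x ⟨hx, hxr⟩ y ⟨_, hyr⟩ t ⟨hxt, hty⟩ => ?_⟩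
  have ht : 0 < t := lt_of_lt_of_le hx hxt
  refine ⟨ht, ?_⟩
  have hmax := (convexOn_norm_one_sub_smul (w ^ 2)).le_max_of_mem_Icc (mem_univ _) (mem_univ _)
    (show (t ^ 2)⁻¹ ∈ Icc (y ^ 2)⁻¹ (x ^ 2)⁻¹ from
      ⟨by gcongr, inv_anti₀ (pow_pos hx 2) (by gcongr; exact hx.le)⟩)
  simp only [← hsmul] at hmax
  have hpos : 0 < ‖1 - w ^ 2 / (t : ℂ) ^ 2‖ :=
    norm_pos_iff.2 (one_sub_sq_div_ofReal_sq_ne_zero hw t)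
  rcases le_max_iff.1 hmax with h | h
  · exact (Real.log_le_log hpos h).trans hyr
  · exact (Real.log_le_log hpos h).trans hxr

theorem le_max_of_quasiconvexOn {s : Set ℝ} {g : ℝ → ℝ} (hg : QuasiconvexOn ℝ s g) {x y z : ℝ}
    (hx : x ∈ s) (hz : z ∈ s) (hxy : x ≤ y) (hyz : y ≤ z) : g y ≤ max (g x) (g z) :=
  ((hg _).ordConnected.out ⟨hx, le_max_left _ _⟩ ⟨hz, le_max_right _ _⟩ ⟨hxy, hyz⟩).2

theorem sum_range_add_le_sum_range_succ_of_interlacing {s : Set ℝ} {g : ℝ → ℝ}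
    (hg : QuasiconvexOn ℝ s g) {x y : ℕ → ℝ} (hx : ∀ n, x n ∈ s) (hxy : ∀ n, x n ≤ y n)
    (hyx : ∀ n, y n ≤ x (n + 1)) {μ : ℝ} (hμ : ∀ n, μ ≤ g (x n)) (N : ℕ) :
    ∑ n ∈ Finset.range N, g (y n) + μ ≤ ∑ n ∈ Finset.range (N + 1), g (x n) := by
  have hxmono : Monotone x := monotone_nat_of_le_succ fun n => (hxy n).trans (hyx n)
  have hymono : Monotone y := monotone_nat_of_le_succ fun n => (hyx n).trans (hxy (n + 1))
  have hy (n : ℕ) : y n ∈ s := hg.convex.ordConnected.out (hx n) (hx (n + 1)) ⟨hxy n, hyx n⟩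
  induction N with
  | zero => simpa using hμ 0
  | succ N ih =>
    rcases le_or_gt (g (y N)) (g (x (N + 1))) with hN | hN
    · rw [Finset.sum_range_succ, Finset.sum_range_succ _ (N + 1)]
      linarith
    -- `g` decreases at `y N`, so by quasiconvexity it has decreased all the way up to there.
    · have hle : ∀ n ∈ Finset.range (N + 1), g (y n) ≤ g (x n) := by
        intro n hn
        have hnN : n ≤ N := Finset.mem_range_succ_iff.1 hn
        have hfirst := le_max_of_quasiconvexOn hg (hx n) (hx (N + 1)) (hxy n)
          ((hyx n).trans (hxmono (by lia)))
        have hlast := le_max_of_quasiconvexOn hg (hy n) (hx (N + 1)) (hymono hnN) (hyx N)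
        grind
      rw [Finset.sum_range_succ _ (N + 1)]
      exact add_le_add (Finset.sum_le_sum hle) (hμ (N + 1))

/-- The function `t ↦ a t - b √t` whose level sets at the positive integers are the zeros of the
product; it plays the role of their counting function. -/
noncomputable def counting (a b t : ℝ) : ℝ :=
  a * t - b * √t

theorem hasDerivAt_counting (a b : ℝ) {t : ℝ} (ht : t ≠ 0) :
    HasDerivAt (counting a b) (a - b * (1 / (2 * √t))) t :=
  (((hasDerivAt_id t).const_mul a).sub ((Real.hasDerivAt_sqrt ht).const_mul b)).congr_deriv
    (by rw [mul_one])

theorem le_mul_sqrt_of_div_sq_le {a b t : ℝ} (ha : 0 < a) (ht : (b / a) ^ 2 ≤ t) :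
    b ≤ a * √t := by
  rw [← div_le_iff₀' ha]
  exact Real.le_sqrt_of_sq_le ht

theorem deriv_counting_pos {a b t : ℝ} (ha : 0 < a) (hb : 0 < b) (ht : (b / a) ^ 2 ≤ t) :
    0 < a - b * (1 / (2 * √t)) := by
  have hsqrt : 0 < √t := Real.sqrt_pos.2 (ht.trans_lt' (by positivity))
  rw [sub_pos, mul_one_div, div_lt_iff₀ (by positivity)]
  linarith [le_mul_sqrt_of_div_sq_le ha ht]

theorem strictMonoOn_counting {a b : ℝ} (ha : 0 < a) (hb : 0 < b) :
    StrictMonoOn (counting a b) (Ici ((b / a) ^ 2)) := by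
  have hpos : ∀ t ∈ Ici ((b / a) ^ 2), t ≠ 0 := fun t ht => (ht.trans_lt' (by positivity)).ne'
  refine strictMonoOn_of_deriv_pos (convex_Ici _)
    (fun t ht => (hasDerivAt_counting a b (hpos t ht)).continuousAt.continuousWithinAt)
    fun t ht => ?_
  have ht' := interior_subset ht
  rw [(hasDerivAt_counting a b (hpos t ht')).deriv]
  exact deriv_counting_pos ha hb ht'

/-- A primitive of `log ‖1 - w² / t²‖` against the measure `d(counting a b t)`. The square root in
`counting` is absorbed by `1 - w² / t² = (1 - σ² / √t²) (1 - (iσ)² / √t²)` with `σ² = w`. -/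
noncomputable def weightedPrimitive (a b : ℝ) (w : ℂ) (t : ℝ) : ℝ :=
  a * logPrimitive w t
    - b * (logPrimitive (w ^ (2⁻¹ : ℂ)) √t + logPrimitive (I * w ^ (2⁻¹ : ℂ)) √t)

/-- The growth of `log ‖P w‖` at infinity for the even canonical product `P` whose zeros are counted
by `counting a b`. -/
noncomputable def growthExponent (a b : ℝ) (w : ℂ) : ℝ :=
  a * π * |w.im| - b * π * √(‖w‖ + |w.im|)

theorem sqrt_norm_sq_add_abs_im_sq (σ : ℂ) :
    √(‖σ ^ 2‖ + |(σ ^ 2).im|) = |σ.re| + |σ.im| := by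
  have him : (σ ^ 2).im = 2 * (σ.re * σ.im) := by
    rw [sq, mul_im]
    ring
  rw [Real.sqrt_eq_iff_mul_self_eq (by positivity) (by positivity), norm_pow, Complex.sq_norm,
    normSq_apply, him, abs_mul, abs_mul, abs_two, ← abs_mul_abs_self σ.re,
    ← abs_mul_abs_self σ.im]
  ring

theorem re_ne_zero_of_im_sq_ne_zero {σ : ℂ} (hσ : (σ ^ 2).im ≠ 0) : σ.re ≠ 0 := by
  rintro h
  simp [sq, mul_im, h] at hσ

theorem im_ne_zero_of_im_sq_ne_zero {σ : ℂ} (hσ : (σ ^ 2).im ≠ 0) : σ.im ≠ 0 := by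
  rintro h
  simp [sq, mul_im, h] at hσ

theorem cpow_two_inv_sq (w : ℂ) : (w ^ (2⁻¹ : ℂ)) ^ 2 = w :=
  cpow_ofNat_inv_pow w 2

theorem im_cpow_two_inv_ne_zero {w : ℂ} (hw : w.im ≠ 0) : (w ^ (2⁻¹ : ℂ)).im ≠ 0 :=
  im_ne_zero_of_im_sq_ne_zero (by rwa [cpow_two_inv_sq])

theorem im_I_mul_cpow_two_inv_ne_zero {w : ℂ} (hw : w.im ≠ 0) : (I * w ^ (2⁻¹ : ℂ)).im ≠ 0 := by
  rw [I_mul_im]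
  exact re_ne_zero_of_im_sq_ne_zero (by rwa [cpow_two_inv_sq])

theorem weightedPrimitive_zero (a b : ℝ) {w : ℂ} (hw : w.im ≠ 0) :
    weightedPrimitive a b w 0 = -growthExponent a b w := by
  have hsqrt := sqrt_norm_sq_add_abs_im_sq (w ^ (2⁻¹ : ℂ))
  rw [cpow_two_inv_sq] at hsqrt
  rw [weightedPrimitive, growthExponent, Real.sqrt_zero, logPrimitive_zero hw,
    logPrimitive_zero (im_cpow_two_inv_ne_zero hw),
    logPrimitive_zero (im_I_mul_cpow_two_inv_ne_zero hw), I_mul_im, hsqrt]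
  ring

theorem tendsto_weightedPrimitive_atTop (a b : ℝ) (w : ℂ) :
    Tendsto (weightedPrimitive a b w) atTop (𝓝 0) := by
  have hσ := (tendsto_logPrimitive_atTop (w ^ (2⁻¹ : ℂ))).comp Real.tendsto_sqrt_atTop
  have hIσ := (tendsto_logPrimitive_atTop (I * w ^ (2⁻¹ : ℂ))).comp Real.tendsto_sqrt_atTop
  rw [show (0 : ℝ) = a * 0 - b * (0 + 0) by ring]
  exact ((tendsto_logPrimitive_atTop w).const_mul a).sub ((hσ.add hIσ).const_mul b)

theorem hasDerivAt_weightedPrimitive (a b : ℝ) {w : ℂ} (hw : w.im ≠ 0) {t : ℝ} (ht : 0 < t) :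
    HasDerivAt (weightedPrimitive a b w)
      ((a - b * (1 / (2 * √t))) * Real.log ‖1 - w ^ 2 / (t : ℂ) ^ 2‖) t := by
  have hsqrt := Real.hasDerivAt_sqrt ht.ne'
  have hpos : 0 < √t := Real.sqrt_pos.2 ht
  have hσ := (hasDerivAt_logPrimitive (im_cpow_two_inv_ne_zero hw) hpos).comp t hsqrt
  have hIσ := (hasDerivAt_logPrimitive (im_I_mul_cpow_two_inv_ne_zero hw) hpos).comp t hsqrt
  refine (((hasDerivAt_logPrimitive hw ht).const_mul a).sub
    ((hσ.add hIσ).const_mul b)).congr_deriv ?_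
  have hσ0 := one_sub_sq_div_ofReal_sq_ne_zero (im_cpow_two_inv_ne_zero hw) √t
  have hIσ0 := one_sub_sq_div_ofReal_sq_ne_zero (im_I_mul_cpow_two_inv_ne_zero hw) √t
  have hfactor : 1 - w ^ 2 / (t : ℂ) ^ 2 =
      (1 - (w ^ (2⁻¹ : ℂ)) ^ 2 / (√t : ℂ) ^ 2) * (1 - (I * w ^ (2⁻¹ : ℂ)) ^ 2 / (√t : ℂ) ^ 2) := by
    rw [mul_pow, I_sq, cpow_two_inv_sq, ← ofReal_pow √t, Real.sq_sqrt ht.le]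
    ring
  rw [hfactor, norm_mul, Real.log_mul (norm_ne_zero_iff.2 hσ0) (norm_ne_zero_iff.2 hIσ0)]
  ring

theorem exists_abs_weightedPrimitive_sub_le {a b : ℝ} (ha : 0 ≤ a) (hb : 0 ≤ b) {t : ℝ}
    (ht : 0 ≤ t) :
    ∃ C, ∀ w : ℂ, w.im ≠ 0 → 4 * t ≤ ‖w‖ →
      |weightedPrimitive a b w t - weightedPrimitive a b w 0
        - 2 * counting a b t * Real.log ‖w‖| ≤ C := by
  refine ⟨a * (4 * t + 2 * |t * Real.log t|) + b * (2 * (4 * √t + 2 * |√t * Real.log √t|)),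
    fun w hw htw => ?_⟩
  have hnorm : ‖w ^ (2⁻¹ : ℂ)‖ ^ 2 = ‖w‖ := by rw [← norm_pow, cpow_two_inv_sq]
  have hlog : Real.log ‖w‖ = 2 * Real.log ‖w ^ (2⁻¹ : ℂ)‖ := by
    rw [← hnorm, Real.log_pow, Nat.cast_ofNat]
  have hsqrt : 2 * √t ≤ ‖w ^ (2⁻¹ : ℂ)‖ := by
    refine (pow_le_pow_iff_left₀ (by positivity) (norm_nonneg _) two_ne_zero).1 ?_
    rwa [hnorm, mul_pow, Real.sq_sqrt ht, show (2 : ℝ) ^ 2 = 4 by norm_num]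
  have hnormI : ‖I * w ^ (2⁻¹ : ℂ)‖ = ‖w ^ (2⁻¹ : ℂ)‖ := by rw [norm_mul, norm_I, one_mul]
  have hA := abs_logPrimitive_sub_le hw ht (by linarith)
  have hB := abs_logPrimitive_sub_le (im_cpow_two_inv_ne_zero hw) (Real.sqrt_nonneg t) hsqrt
  have hC := abs_logPrimitive_sub_le (im_I_mul_cpow_two_inv_ne_zero hw) (Real.sqrt_nonneg t)
    (hsqrt.trans_eq hnormI.symm)
  rw [hnormI] at hC
  set A := logPrimitive w t - logPrimitive w 0 - 2 * t * Real.log ‖w‖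
  set B := logPrimitive (w ^ (2⁻¹ : ℂ)) √t - logPrimitive (w ^ (2⁻¹ : ℂ)) 0
    - 2 * √t * Real.log ‖w ^ (2⁻¹ : ℂ)‖
  set C := logPrimitive (I * w ^ (2⁻¹ : ℂ)) √t - logPrimitive (I * w ^ (2⁻¹ : ℂ)) 0
    - 2 * √t * Real.log ‖w ^ (2⁻¹ : ℂ)‖
  have hsplit : weightedPrimitive a b w t - weightedPrimitive a b w 0
      - 2 * counting a b t * Real.log ‖w‖ = a * A - b * (B + C) := by
    simp only [A, B, C, weightedPrimitive, counting, Real.sqrt_zero, hlog]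
    ring
  have hBC : |B + C| ≤ 2 * (4 * √t + 2 * |√t * Real.log √t|) :=
    (abs_add_le B C).trans (by linarith)
  rw [hsplit]
  refine (abs_sub _ _).trans ?_
  rw [abs_mul, abs_mul, abs_of_nonneg ha, abs_of_nonneg hb]
  gcongr

theorem exists_weightedPrimitive_sub_eq {a b : ℝ} (ha : 0 < a) (hb : 0 < b) {w : ℂ}
    (hw : w.im ≠ 0) {s t : ℝ} (hs : (b / a) ^ 2 ≤ s) (hst : s < t) :
    ∃ ξ ∈ Ioo s t, weightedPrimitive a b w t - weightedPrimitive a b w s =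
      (counting a b t - counting a b s) * Real.log ‖1 - w ^ 2 / (ξ : ℂ) ^ 2‖ := by
  have hpos : ∀ x, s ≤ x → 0 < x := fun x hx => (hs.trans hx).trans_lt' (by positivity)
  have hν : ∀ x, s ≤ x → HasDerivAt (counting a b) (a - b * (1 / (2 * √x))) x :=
    fun x hx => hasDerivAt_counting a b (hpos x hx).ne'
  have hΦ := fun x hx => hasDerivAt_weightedPrimitive a b hw (hpos x hx)
  obtain ⟨ξ, hξ, hslope⟩ := exists_ratio_hasDerivAt_eq_ratio_slope (weightedPrimitive a b w) _ hst
    (fun x hx => (hΦ x hx.1).continuousAt.continuousWithinAt) (fun x hx => hΦ x hx.1.le)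
    (counting a b) _
    (fun x hx => (hν x hx.1).continuousAt.continuousWithinAt) (fun x hx => hν x hx.1.le)
  refine ⟨ξ, hξ, mul_right_cancel₀ (deriv_counting_pos ha hb (hs.trans hξ.1.le)).ne' ?_⟩
  rw [← hslope]
  ring

/-- `t n` is the solution of `a t - b √t = n` on `[(b / a)², ∞)`, where the left-hand side increases
from `0`; in particular `t 0 = (b / a)²`. -/
structure IsLevelSequence (a b : ℝ) (t : ℕ → ℝ) : Prop where
  le (n : ℕ) : (b / a) ^ 2 ≤ t n
  counting_eq (n : ℕ) : counting a b (t n) = n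

theorem exists_isLevelSequence_of_succ {a b : ℝ} (ha : 0 < a) (hb : 0 ≤ b) {τ : ℕ → ℝ}
    (hτ : ∀ n : ℕ, 1 ≤ n → (b / a) ^ 2 ≤ τ n ∧ counting a b (τ n) = n) :
    ∃ t, IsLevelSequence a b t ∧ ∀ n, τ (n + 1) = t (n + 1) := by
  refine ⟨Function.update τ 0 ((b / a) ^ 2), ⟨fun n => ?_, fun n => ?_⟩, fun n => by simp⟩
  · rcases n with _ | n
    · simp
    · simpa using (hτ (n + 1) (by simp)).1
  · rcases n with _ | n
    · rw [Function.update_self, counting, Real.sqrt_sq (by positivity), Nat.cast_zero]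
      field_simp
      ring
    · simpa using (hτ (n + 1) (by simp)).2

namespace IsLevelSequence

variable {a b : ℝ} {t : ℕ → ℝ}

theorem pos (h : IsLevelSequence a b t) (ha : 0 < a) (hb : 0 < b) (n : ℕ) : 0 < t n :=
  (h.le n).trans_lt' (by positivity)

theorem strictMono (h : IsLevelSequence a b t) (ha : 0 < a) (hb : 0 < b) : StrictMono t :=
  strictMono_nat_of_lt_succ fun n => ((strictMonoOn_counting ha hb).lt_iff_lt (h.le n) (h.le _)).1
    (by rw [h.counting_eq, h.counting_eq]; simp)

theorem natCast_le (h : IsLevelSequence a b t) (hb : 0 ≤ b) (n : ℕ) : (n : ℝ) ≤ a * t n := by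
  have := h.counting_eq n
  rw [counting] at this
  linarith [mul_nonneg hb (Real.sqrt_nonneg (t n))]

theorem tendsto_atTop (h : IsLevelSequence a b t) (ha : 0 < a) (hb : 0 ≤ b) :
    Tendsto t atTop atTop :=
  (tendsto_atTop_mono (h.natCast_le hb) tendsto_natCast_atTop_atTop).atTop_of_const_mul₀ ha

theorem exists_mem_Ioo_weightedPrimitive_sub_eq (h : IsLevelSequence a b t) (ha : 0 < a)
    (hb : 0 < b) {w : ℂ} (hw : w.im ≠ 0) (n : ℕ) :
    ∃ ξ ∈ Ioo (t n) (t (n + 1)), weightedPrimitive a b w (t (n + 1)) - weightedPrimitive a b w (t n)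
      = Real.log ‖1 - w ^ 2 / (ξ : ℂ) ^ 2‖ := by
  simpa [h.counting_eq] using exists_weightedPrimitive_sub_eq ha hb hw (h.le n)
    (h.strictMono ha hb n.lt_succ_self)

theorem sum_log_add_le (h : IsLevelSequence a b t) (ha : 0 < a) (hb : 0 < b) {w : ℂ}
    (hw : w.im ≠ 0) {μ : ℝ} (hμ : ∀ v : ℝ, μ ≤ Real.log ‖1 - w ^ 2 / (v : ℂ) ^ 2‖) (N : ℕ) :
    ∑ n ∈ Finset.range N, Real.log ‖1 - w ^ 2 / (t (n + 1) : ℂ) ^ 2‖ + μ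
      ≤ weightedPrimitive a b w (t (N + 1)) - weightedPrimitive a b w (t 0) := by
  choose ξ hξ hstep using h.exists_mem_Ioo_weightedPrimitive_sub_eq ha hb hw
  refine (sum_range_add_le_sum_range_succ_of_interlacing
    (quasiconvexOn_log_norm_one_sub_sq_div_sq hw) (y := fun n => t (n + 1))
    (fun n => (h.pos ha hb n).trans (hξ n).1) (fun n => (hξ n).2.le) (fun n => (hξ (n + 1)).1.le)
    (fun n => hμ (ξ n)) N).trans_eq ?_
  simp only [← hstep]
  exact Finset.sum_range_sub (fun n => weightedPrimitive a b w (t n)) (N + 1)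

theorem le_sum_log (h : IsLevelSequence a b t) (ha : 0 < a) (hb : 0 < b) {w : ℂ}
    (hw : w.im ≠ 0) {μ : ℝ} (hμ : ∀ v : ℝ, μ ≤ Real.log ‖1 - w ^ 2 / (v : ℂ) ^ 2‖) (N : ℕ) :
    weightedPrimitive a b w (t (N + 1)) - weightedPrimitive a b w (t 1) + μ
      ≤ ∑ n ∈ Finset.range (N + 1), Real.log ‖1 - w ^ 2 / (t (n + 1) : ℂ) ^ 2‖ := by
  choose ξ hξ hstep using h.exists_mem_Ioo_weightedPrimitive_sub_eq ha hb hw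
  refine Eq.trans_le ?_ (sum_range_add_le_sum_range_succ_of_interlacing
    (quasiconvexOn_log_norm_one_sub_sq_div_sq hw) (x := fun n => t (n + 1))
    (fun n => h.pos ha hb (n + 1)) (fun n => (hξ (n + 1)).1.le) (fun n => (hξ (n + 1)).2.le)
    (fun n => hμ (t (n + 1))) N)
  simp only [← hstep]
  rw [Finset.sum_range_sub (fun n => weightedPrimitive a b w (t (n + 1))) N]

end IsLevelSequence

/-- The even canonical product with zeros `± s n`. -/
noncomputable def evenProduct (s : ℕ → ℝ) (w : ℂ) : ℂ :=
  ∏' n, (1 - w ^ 2 / (s n : ℂ) ^ 2)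

theorem norm_neg_sq_div_ofReal_sq (w : ℂ) (v : ℝ) :
    ‖-(w ^ 2 / (v : ℂ) ^ 2)‖ = ‖w‖ ^ 2 * (v ^ 2)⁻¹ := by
  rw [norm_neg, norm_div, norm_pow, norm_pow, norm_real, Real.norm_eq_abs, sq_abs, div_eq_mul_inv]

section EvenProduct

variable {s : ℕ → ℝ} (hs : Summable fun n => (s n ^ 2)⁻¹)
include hs

theorem summable_norm_neg_sq_div_sq (w : ℂ) :
    Summable fun n => ‖-(w ^ 2 / (s n : ℂ) ^ 2)‖ := by
  simp only [norm_neg_sq_div_ofReal_sq]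
  exact hs.mul_left _

theorem multipliable_one_sub_sq_div_sq (w : ℂ) :
    Multipliable fun n => 1 - w ^ 2 / (s n : ℂ) ^ 2 := by
  simpa only [sub_eq_add_neg] using
    multipliable_one_add_of_summable (summable_norm_neg_sq_div_sq hs w)

theorem evenProduct_ne_zero {w : ℂ} (hw : w.im ≠ 0) : evenProduct s w ≠ 0 := by
  simp only [evenProduct, sub_eq_add_neg]
  refine tprod_one_add_ne_zero_of_summable (fun n => ?_) (summable_norm_neg_sq_div_sq hs w)
  simpa only [sub_eq_add_neg] using one_sub_sq_div_ofReal_sq_ne_zero hw (s n)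

theorem tendsto_sum_log_evenProduct {w : ℂ} (hw : w.im ≠ 0) :
    Tendsto (fun N => ∑ n ∈ Finset.range N, Real.log ‖1 - w ^ 2 / (s n : ℂ) ^ 2‖) atTop
      (𝓝 (Real.log ‖evenProduct s w‖)) := by
  have hprod := (multipliable_one_sub_sq_div_sq hs w).hasProd.tendsto_prod_nat.norm.log
    (norm_ne_zero_iff.2 (evenProduct_ne_zero hs hw))
  refine hprod.congr fun N => ?_
  rw [norm_prod, Real.log_prod fun n _ =>
    norm_ne_zero_iff.2 (one_sub_sq_div_ofReal_sq_ne_zero hw (s n))]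

theorem differentiable_evenProduct : Differentiable ℂ (evenProduct s) := by
  intro w₀
  have hopen : IsOpen (Metric.ball (0 : ℂ) (‖w₀‖ + 1)) := Metric.isOpen_ball
  have hbound : ∀ n, ∀ w ∈ Metric.ball (0 : ℂ) (‖w₀‖ + 1),
      ‖-(w ^ 2 / (s n : ℂ) ^ 2)‖ ≤ (‖w₀‖ + 1) ^ 2 * (s n ^ 2)⁻¹ := by
    intro n w hw
    have hw' : ‖w‖ ≤ ‖w₀‖ + 1 := (mem_ball_zero_iff.1 hw).le
    rw [norm_neg_sq_div_ofReal_sq]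
    gcongr
  have hunif := Summable.hasProdLocallyUniformlyOn_nat_one_add hopen (hs.mul_left _)
    (.of_forall hbound) fun n => by fun_prop
  have hdiff := hunif.differentiableOn (.of_forall fun N => by
    simpa only [Finset.prod_fn] using DifferentiableOn.finsetProd (by fun_prop)) hopen
  simp only [← sub_eq_add_neg] at hdiff
  exact hdiff.differentiableAt (hopen.mem_nhds (by simp))

end EvenProduct

theorem sinh_le_self_mul_exp (x : ℝ) : Real.sinh x ≤ x * Real.exp x := by
  have hexp : Real.exp (-x) = Real.exp x * Real.exp (-(2 * x)) := by
    rw [← Real.exp_add]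
    ring_nf
  rw [Real.sinh_eq, hexp]
  nlinarith [Real.add_one_le_exp (-(2 * x)), Real.exp_pos x]

section LinearGrowth

variable {a : ℝ} {s : ℕ → ℝ} (hs : ∀ n : ℕ, (n : ℝ) + 1 ≤ a * s n)
include hs

theorem inv_sq_le_of_add_one_le_mul (n : ℕ) : (s n ^ 2)⁻¹ ≤ a ^ 2 / ((n : ℝ) + 1) ^ 2 := by
  have hpos : 0 < a * s n := lt_of_lt_of_le (by positivity) (hs n)
  have hs0 : 0 < s n ^ 2 := sq_pos_of_ne_zero (right_ne_zero_of_mul hpos.ne')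
  rw [inv_le_iff_one_le_mul₀ hs0, div_mul_eq_mul_div, one_le_div (by positivity), ← mul_pow]
  exact pow_le_pow_left₀ (by positivity) (hs n) 2

theorem summable_inv_sq_of_add_one_le_mul : Summable fun n => (s n ^ 2)⁻¹ := by
  refine Summable.of_nonneg_of_le (fun n => by positivity) (inv_sq_le_of_add_one_le_mul hs) ?_
  simpa [div_eq_mul_inv] using
    ((summable_nat_add_iff 1).2 (Real.summable_nat_pow_inv.2 one_lt_two)).mul_left (a ^ 2)

theorem norm_one_sub_sq_div_sq_le_norm_one_add_sineTerm (w : ℂ) (n : ℕ) :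
    ‖1 - w ^ 2 / (s n : ℂ) ^ 2‖ ≤ ‖1 + sineTerm ((a * ‖w‖ : ℝ) * I) n‖ := by
  have hsine : 1 + sineTerm ((a * ‖w‖ : ℝ) * I) n
      = ((1 + (a * ‖w‖) ^ 2 / ((n : ℝ) + 1) ^ 2 : ℝ) : ℂ) := by
    simp only [sineTerm, mul_pow, I_sq]
    push_cast
    ring
  calc ‖1 - w ^ 2 / (s n : ℂ) ^ 2‖ ≤ 1 + ‖w‖ ^ 2 * (s n ^ 2)⁻¹ := by
        rw [← norm_neg_sq_div_ofReal_sq, sub_eq_add_neg, ← norm_one (α := ℂ)]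
        exact norm_add_le _ _
    _ ≤ 1 + ‖w‖ ^ 2 * (a ^ 2 / ((n : ℝ) + 1) ^ 2) := by
        gcongr
        exact inv_sq_le_of_add_one_le_mul hs n
    _ = ‖1 + sineTerm ((a * ‖w‖ : ℝ) * I) n‖ := by
        rw [hsine, norm_real, Real.norm_of_nonneg (by positivity), mul_pow]
        ring

theorem norm_evenProduct_le_exp (ha : 0 < a) (w : ℂ) :
    ‖evenProduct s w‖ ≤ Real.exp (a * π * ‖w‖) := by
  rcases eq_or_ne w 0 with rfl | hw
  · simp [evenProduct]
  have hfactor := norm_one_sub_sq_div_sq_le_norm_one_add_sineTerm hs w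
  set y := a * ‖w‖
  have hy : 0 < y := mul_pos ha (norm_pos_iff.2 hw)
  have hyI : (y : ℂ) * I ≠ 0 := mul_ne_zero (ofReal_ne_zero.2 hy.ne') I_ne_zero
  have hπy : 0 < π * y := by positivity
  calc ‖evenProduct s w‖ ≤ ‖sin (π * (y * I)) / (π * (y * I))‖ := by
        refine le_of_tendsto_of_tendsto' (multipliable_one_sub_sq_div_sq
          (summable_inv_sq_of_add_one_le_mul hs) w).hasProd.tendsto_prod_nat.norm
          (tendsto_euler_sin_prod' hyI).norm fun N => ?_
        rw [norm_prod, norm_prod]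
        exact Finset.prod_le_prod (fun _ _ => norm_nonneg _) fun n _ => hfactor n
    _ = Real.sinh (π * y) / (π * y) := by
        rw [← mul_assoc, ← ofReal_mul, sin_mul_I, mul_div_mul_right _ _ I_ne_zero, ← ofReal_sinh,
          ← ofReal_div, norm_real, Real.norm_of_nonneg (by positivity)]
    _ ≤ Real.exp (a * π * ‖w‖) := by
        rw [div_le_iff₀' hπy, show a * π * ‖w‖ = π * y by ring]
        exact sinh_le_self_mul_exp _

end LinearGrowth

namespace IsLevelSequence

variable {a b : ℝ} {t : ℕ → ℝ}

theorem add_one_le (h : IsLevelSequence a b t) (hb : 0 ≤ b) (n : ℕ) :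
    (n : ℝ) + 1 ≤ a * t (n + 1) := by
  simpa using h.natCast_le hb (n + 1)

theorem summable_inv_sq (h : IsLevelSequence a b t) (hb : 0 ≤ b) :
    Summable fun n => (t (n + 1) ^ 2)⁻¹ :=
  summable_inv_sq_of_add_one_le_mul (h.add_one_le hb)

theorem log_norm_evenProduct_add_le (h : IsLevelSequence a b t) (ha : 0 < a) (hb : 0 < b) {w : ℂ}
    (hw : w.im ≠ 0) {μ : ℝ} (hμ : ∀ v : ℝ, μ ≤ Real.log ‖1 - w ^ 2 / (v : ℂ) ^ 2‖) :
    Real.log ‖evenProduct (fun n => t (n + 1)) w‖ + μ ≤ -weightedPrimitive a b w (t 0) := by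
  have hlim := ((tendsto_weightedPrimitive_atTop a b w).comp (((tendsto_add_atTop_iff_nat 1).2
    (h.tendsto_atTop ha hb.le)))).sub_const (weightedPrimitive a b w (t 0))
  rw [zero_sub] at hlim
  exact le_of_tendsto_of_tendsto'
    ((tendsto_sum_log_evenProduct (h.summable_inv_sq hb.le) hw).add_const μ) hlim
    (h.sum_log_add_le ha hb hw hμ)

theorem le_log_norm_evenProduct (h : IsLevelSequence a b t) (ha : 0 < a) (hb : 0 < b) {w : ℂ}
    (hw : w.im ≠ 0) {μ : ℝ} (hμ : ∀ v : ℝ, μ ≤ Real.log ‖1 - w ^ 2 / (v : ℂ) ^ 2‖) :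
    -weightedPrimitive a b w (t 1) + μ ≤ Real.log ‖evenProduct (fun n => t (n + 1)) w‖ := by
  have hlim := (((tendsto_weightedPrimitive_atTop a b w).comp (((tendsto_add_atTop_iff_nat 1).2
    (h.tendsto_atTop ha hb.le)))).sub_const (weightedPrimitive a b w (t 1))).add_const μ
  rw [zero_sub] at hlim
  exact le_of_tendsto_of_tendsto' hlim ((tendsto_add_atTop_iff_nat 1).2
    (tendsto_sum_log_evenProduct (h.summable_inv_sq hb.le) hw)) (h.le_sum_log ha hb hw hμ)

theorem exists_log_norm_evenProduct_bounds (h : IsLevelSequence a b t) (ha : 0 < a) (hb : 0 < b) :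
    ∃ C, ∀ᶠ w in cobounded ℂ, w.im ≠ 0 → ∀ μ : ℝ,
      (∀ v : ℝ, μ ≤ Real.log ‖1 - w ^ 2 / (v : ℂ) ^ 2‖) →
      Real.log ‖evenProduct (fun n => t (n + 1)) w‖ ≤ growthExponent a b w - μ + C ∧
      growthExponent a b w - 2 * Real.log ‖w‖ + μ - C
        ≤ Real.log ‖evenProduct (fun n => t (n + 1)) w‖ := by
  obtain ⟨C₀, hC₀⟩ := exists_abs_weightedPrimitive_sub_le ha.le hb.le (h.pos ha hb 0).le
  obtain ⟨C₁, hC₁⟩ := exists_abs_weightedPrimitive_sub_le ha.le hb.le (h.pos ha hb 1).le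
  refine ⟨max C₀ C₁, ?_⟩
  filter_upwards [eventually_cobounded_le_norm (4 * t 0), eventually_cobounded_le_norm (4 * t 1)]
    with w hw₀ hw₁ hw μ hμ
  have hΦ₀ := (abs_le.1 ((hC₀ w hw hw₀).trans (le_max_left _ C₁))).1
  have hΦ₁ := (abs_le.1 ((hC₁ w hw hw₁).trans (le_max_right C₀ _))).2
  rw [weightedPrimitive_zero a b hw, h.counting_eq] at hΦ₀ hΦ₁
  have hupper := h.log_norm_evenProduct_add_le ha hb hw hμ
  have hlower := h.le_log_norm_evenProduct ha hb hw hμ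
  push_cast at hΦ₀ hΦ₁
  constructor <;> linarith

end IsLevelSequence

theorem isBigO_of_log_norm_le_log_norm_add {α E F : Type*} [NormedAddCommGroup E]
    [NormedAddCommGroup F] {l : Filter α} {f : α → E} {g : α → F} (hg : ∀ᶠ x in l, g x ≠ 0)
    {C : ℝ} (h : ∀ᶠ x in l, Real.log ‖f x‖ ≤ Real.log ‖g x‖ + C) : f =O[l] g := by
  refine IsBigO.of_bound (Real.exp C) ?_
  filter_upwards [hg, h] with x hgx hx
  calc ‖f x‖ ≤ Real.exp (Real.log ‖f x‖) := Real.le_exp_log _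
    _ ≤ Real.exp (Real.log ‖g x‖ + C) := Real.exp_le_exp.2 hx
    _ = Real.exp C * ‖g x‖ := by
      rw [Real.exp_add, Real.exp_log (norm_pos_iff.2 hgx), mul_comm]

theorem abs_im_div_le_norm_one_sub_sq_div_sq {w : ℂ} (hw : ‖w‖ ≤ 2 * |w.re|) (v : ℝ) :
    |w.im| / (2 * |w.re|) ≤ ‖1 - w ^ 2 / (v : ℂ) ^ 2‖ := by
  refine le_trans ?_ (abs_im_div_norm_le_norm_one_sub_div (w ^ 2) v)
  rcases eq_or_ne w 0 with rfl | hw0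
  · simp
  have hpos : 0 < ‖w‖ := norm_pos_iff.2 hw0
  have him : |(w ^ 2).im| = 2 * |w.re| * |w.im| := by
    rw [sq, mul_im, mul_comm w.im, ← two_mul, abs_mul, abs_mul, abs_two, mul_assoc]
  rw [him, norm_pow, div_le_div_iff₀ (by linarith) (by positivity)]
  calc |w.im| * ‖w‖ ^ 2 ≤ |w.im| * (2 * |w.re|) ^ 2 := by gcongr
    _ = 2 * |w.re| * |w.im| * (2 * |w.re|) := by ring

/-- A neighbourhood of the parabolas `Im w = ± (Re w)²`, which contains the points `iλ_k⁻ - i`. -/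
def nearParabola : Set ℂ :=
  {w | |w.im| ∈ Icc (w.re ^ 2 - 1) (w.re ^ 2 + 1)}

theorem eventually_abs_re_le_abs_im_of_nearParabola :
    ∀ᶠ w in cobounded ℂ ⊓ 𝓟 nearParabola, w.im ≠ 0 ∧ |w.re| ≤ |w.im| := by
  rw [eventually_inf_principal]
  filter_upwards [eventually_cobounded_le_norm 7] with w hlarge ⟨hlower, hupper⟩
  rw [← sq_abs] at hlower hupper
  have hre : 2 ≤ |w.re| := by
    by_contra! hre
    nlinarith [norm_le_abs_re_add_abs_im w, abs_nonneg w.re]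
  have him : |w.re| ≤ |w.im| := by nlinarith
  exact ⟨abs_pos.1 (by linarith), him⟩

section GrowthExponent

variable {a b Y : ℝ}

theorem growthExponent_le_of_abs_im_le (ha : 0 ≤ a) (hb : 0 ≤ b) {w : ℂ} (hw : |w.im| ≤ Y) :
    growthExponent a b w ≤ a * π * Y - b * π * √|w.re| := by
  have hre : |w.re| ≤ ‖w‖ + |w.im| := by linarith [abs_re_le_norm w, abs_nonneg w.im]
  rw [growthExponent]
  gcongr

theorem le_growthExponent_of_abs_im_le (ha : 0 ≤ a) (hb : 0 ≤ b) {w : ℂ} (hw : |w.im| ≤ Y) :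
    -(b * π * (√|w.re| + √(2 * Y))) ≤ growthExponent a b w := by
  have hY : 0 ≤ 2 * Y := by linarith [abs_nonneg w.im]
  have hsqrt : √(‖w‖ + |w.im|) ≤ √|w.re| + √(2 * Y) := by
    refine Real.sqrt_le_iff.2 ⟨by positivity, ?_⟩
    rw [add_sq, Real.sq_sqrt (abs_nonneg _), Real.sq_sqrt hY]
    have hcross : 0 ≤ 2 * √|w.re| * √(2 * Y) := by positivity
    linarith [norm_le_abs_re_add_abs_im w]
  have hmain : 0 ≤ a * π * |w.im| := by positivity
  have hroot : b * π * √(‖w‖ + |w.im|) ≤ b * π * (√|w.re| + √(2 * Y)) := by gcongr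
  rw [growthExponent]
  linarith

theorem exists_le_growthExponent_sub_log_of_mem_nearParabola (ha : 0 ≤ a) (hb : 0 < b) :
    ∃ C, ∀ w : ℂ, w ≠ 0 → w ∈ nearParabola →
      a * π * w.re ^ 2 - 2 * b * π * |w.re| - C ≤ growthExponent a b w - 2 * Real.log ‖w‖ := by
  refine ⟨a * π + 2 * (b * π) - 4 * (1 + Real.log (b * π / 8)), fun w hw ⟨hlower, hupper⟩ => ?_⟩
  have hnorm := norm_le_abs_re_add_abs_im w
  have hx := abs_nonneg w.re
  rw [← sq_abs] at hlower hupper ⊢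
  have hsqrt : √(‖w‖ + |w.im|) ≤ 3 / 2 * (|w.re| + 1) :=
    Real.sqrt_le_iff.2 ⟨by positivity, by nlinarith⟩
  have hlog : Real.log ‖w‖ ≤ 2 * Real.log (|w.re| + 1) := by
    rw [← Nat.cast_ofNat, ← Real.log_pow]
    exact Real.log_le_log (norm_pos_iff.2 hw) (by nlinarith)
  have hsublinear :
      Real.log (|w.re| + 1) + Real.log (b * π / 8) ≤ b * π / 8 * (|w.re| + 1) - 1 := by
    rw [add_comm, ← Real.log_mul (by positivity) (by positivity)]
    exact Real.log_le_sub_one_of_pos (by positivity)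
  have hmain : a * π * (|w.re| ^ 2 - 1) ≤ a * π * |w.im| := by gcongr
  have hroot : b * π * √(‖w‖ + |w.im|) ≤ b * π * (3 / 2 * (|w.re| + 1)) := by gcongr
  rw [growthExponent]
  linarith

end GrowthExponent

namespace IsLevelSequence

variable {a b : ℝ} {t : ℕ → ℝ}

theorem exists_log_norm_evenProduct_bounds_of_strip (h : IsLevelSequence a b t) (ha : 0 < a)
    (hb : 0 < b) {c Y : ℝ} (hc : 0 < c) :
    ∃ C, ∀ᶠ w in cobounded ℂ ⊓ 𝓟 {w | |w.im| ∈ Icc c Y}, w.re ≠ 0 ∧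
      Real.log ‖evenProduct (fun n => t (n + 1)) w‖
        ≤ Real.log |w.re| - b * π * √|w.re| + C ∧
      -(b * π * √|w.re|) - 3 * Real.log |w.re| - C
        ≤ Real.log ‖evenProduct (fun n => t (n + 1)) w‖ := by
  obtain ⟨C, hC⟩ := h.exists_log_norm_evenProduct_bounds ha hb
  refine ⟨3 * Real.log 2 - Real.log c + C + max (a * π * Y) (b * π * √(2 * Y)), ?_⟩
  rw [eventually_inf_principal]
  filter_upwards [hC, eventually_cobounded_le_norm (2 * Y)] with w hbounds hlarge ⟨hcy, hyY⟩
  have hnorm := norm_le_abs_re_add_abs_im w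
  have hre : 0 < |w.re| := by linarith
  have hpos : 0 < ‖w‖ := hre.trans_le (abs_re_le_norm w)
  have hwre : ‖w‖ ≤ 2 * |w.re| := by linarith
  obtain ⟨hupper, hlower⟩ := hbounds (abs_pos.1 (hc.trans_le hcy)) (Real.log (c / (2 * |w.re|)))
    fun v => Real.log_le_log (by positivity)
      (le_trans (by gcongr) (abs_im_div_le_norm_one_sub_sq_div_sq hwre v))
  rw [Real.log_div hc.ne' (by positivity), Real.log_mul two_ne_zero hre.ne'] at hupper hlower
  have hlog := Real.log_le_log hpos hwre
  rw [Real.log_mul two_ne_zero hre.ne'] at hlog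
  have hlog_two := Real.log_pos one_lt_two
  have hGupper := growthExponent_le_of_abs_im_le ha.le hb.le hyY
  have hGlower := le_growthExponent_of_abs_im_le ha.le hb.le hyY
  refine ⟨abs_pos.1 hre, ?_, ?_⟩
  · linarith [le_max_left (a * π * Y) (b * π * √(2 * Y))]
  · linarith [le_max_right (a * π * Y) (b * π * √(2 * Y))]

theorem evenProduct_isBigO_of_strip (h : IsLevelSequence a b t) (ha : 0 < a) (hb : 0 < b)
    {c Y : ℝ} (hc : 0 < c) :
    evenProduct (fun n => t (n + 1)) =O[cobounded ℂ ⊓ 𝓟 {w | |w.im| ∈ Icc c Y}]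
      fun w => |w.re| * Real.exp (-(b * π * √|w.re|)) := by
  obtain ⟨C, hC⟩ := h.exists_log_norm_evenProduct_bounds_of_strip ha hb (Y := Y) hc
  refine isBigO_of_log_norm_le_log_norm_add (C := C) ?_ ?_
  · exact hC.mono fun w hw => mul_ne_zero (abs_ne_zero.2 hw.1) (Real.exp_ne_zero _)
  · filter_upwards [hC] with w ⟨hre, hupper, _⟩
    rw [Real.norm_of_nonneg (by positivity), Real.log_mul (abs_ne_zero.2 hre) (Real.exp_ne_zero _),
      Real.log_exp]
    linarith

theorem isBigO_evenProduct_of_strip (h : IsLevelSequence a b t) (ha : 0 < a) (hb : 0 < b)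
    {c Y : ℝ} (hc : 0 < c) :
    (fun w : ℂ => Real.exp (-(b * π * √|w.re|)) / |w.re| ^ 3)
      =O[cobounded ℂ ⊓ 𝓟 {w | |w.im| ∈ Icc c Y}] evenProduct (fun n => t (n + 1)) := by
  obtain ⟨C, hC⟩ := h.exists_log_norm_evenProduct_bounds_of_strip ha hb (Y := Y) hc
  refine isBigO_of_log_norm_le_log_norm_add (C := C) ?_ ?_
  · filter_upwards [mem_inf_of_right (mem_principal_self _)] with w ⟨hw, _⟩
    exact evenProduct_ne_zero (h.summable_inv_sq hb.le) (abs_pos.1 (hc.trans_le hw))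
  · filter_upwards [hC] with w ⟨hre, _, hlower⟩
    rw [Real.norm_of_nonneg (by positivity), Real.log_div (Real.exp_ne_zero _)
      (pow_ne_zero 3 (abs_ne_zero.2 hre)), Real.log_exp, Real.log_pow]
    push_cast
    linarith

theorem isBigO_evenProduct_of_nearParabola (h : IsLevelSequence a b t) (ha : 0 < a) (hb : 0 < b) :
    (fun w : ℂ => Real.exp (a * π * w.re ^ 2 - 2 * b * π * |w.re|))
      =O[cobounded ℂ ⊓ 𝓟 nearParabola] evenProduct (fun n => t (n + 1)) := by
  obtain ⟨C, hC⟩ := h.exists_log_norm_evenProduct_bounds ha hb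
  obtain ⟨K, hK⟩ := exists_le_growthExponent_sub_log_of_mem_nearParabola ha.le hb
  have him := eventually_abs_re_le_abs_im_of_nearParabola
  refine isBigO_of_log_norm_le_log_norm_add (C := C + K) ?_ ?_
  · exact him.mono fun w hw => evenProduct_ne_zero (h.summable_inv_sq hb.le) hw.1
  · filter_upwards [him, hC.filter_mono inf_le_left, mem_inf_of_right (mem_principal_self _)]
      with w ⟨him0, hre⟩ hbounds hw
    have hsq : (w ^ 2).re ≤ 0 := by
      rw [sq, mul_re, ← sq, ← sq, sub_nonpos]
      exact sq_le_sq.2 hre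
    obtain ⟨-, hlower⟩ := hbounds him0 0
      fun v => Real.log_nonneg (one_le_norm_one_sub_div hsq v)
    rw [Real.norm_of_nonneg (by positivity), Real.log_exp]
    linarith [hK w (fun h0 => him0 (by rw [h0, zero_im])) hw]

end IsLevelSequence

theorem isBigO_top_of_isBigO_cocompact {α E F : Type*} [TopologicalSpace α]
    [NormedAddCommGroup E] [NormedAddCommGroup F] {f : α → E} {g : α → F} (hf : Continuous f)
    (hg : Continuous g) (hg0 : ∀ x, g x ≠ 0) (h : f =O[cocompact α] g) : f =O[⊤] g := by
  obtain ⟨C, hC⟩ := h.bound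
  obtain ⟨K, hK, hKC⟩ := mem_cocompact.1 hC
  have hout : f =O[𝓟 Kᶜ] g := IsBigO.of_bound C (mem_principal.2 hKC)
  have hin : f =O[𝓟 K] g :=
    (hf.continuousOn.isBigO_principal hK (norm_ne_zero_iff.2 one_ne_zero)).trans
      (hg.continuousOn.isBigO_rev_principal hK (fun x _ => hg0 x) (1 : ℝ))
  have huniv : 𝓟 K ⊔ 𝓟 Kᶜ = ⊤ := by rw [sup_principal, union_compl_self, principal_univ]
  exact huniv ▸ hin.sup hout

theorem ofReal_cpow_one_half (r : ℝ) : (r : ℂ) ^ ((1 : ℂ) / 2) = √r + √(-r) * I := by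
  have hhalf : (1 : ℂ) / 2 = ((1 / 2 : ℝ) : ℂ) := by norm_num
  rcases le_total 0 r with hr | hr
  · rw [hhalf, ← ofReal_cpow hr, ← Real.sqrt_eq_rpow, Real.sqrt_eq_zero_of_nonpos (neg_nonpos.2 hr)]
    simp
  · have hexp : exp (π * I * (1 / 2 : ℂ)) = I := by
      rw [mul_one_div, mul_div_right_comm, exp_pi_div_two_mul_I]
    rw [ofReal_cpow_of_nonpos hr, hexp, hhalf, ← ofReal_neg,
      ← ofReal_cpow (neg_nonneg.2 hr), ← Real.sqrt_eq_rpow, Real.sqrt_eq_zero_of_nonpos hr]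
    simp

theorem pow_four_sub_cpow_one_half (k : ℤ) :
    ((k : ℂ) ^ 4 - 4 * (k : ℂ) ^ 2) ^ ((1 : ℂ) / 2)
      = √((k : ℝ) ^ 4 - 4 * (k : ℝ) ^ 2) + √(4 * (k : ℝ) ^ 2 - (k : ℝ) ^ 4) * I := by
  rw [← neg_sub ((k : ℝ) ^ 4), ← ofReal_cpow_one_half]
  push_cast
  rfl

theorem I_mul_lamP_sub_I_re (k : ℤ) :
    (I * lamP k - I).re = -k - √(4 * (k : ℝ) ^ 2 - (k : ℝ) ^ 4) / 2 := by
  rw [lamP, pow_four_sub_cpow_one_half]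
  simp [sq]
  ring

theorem I_mul_lamP_sub_I_im (k : ℤ) :
    (I * lamP k - I).im = -1 - ((k : ℝ) ^ 2 - √((k : ℝ) ^ 4 - 4 * (k : ℝ) ^ 2)) / 2 := by
  rw [lamP, pow_four_sub_cpow_one_half]
  simp [sq]
  ring

theorem I_mul_lamM_sub_I_re (k : ℤ) :
    (I * lamM k - I).re = -k + √(4 * (k : ℝ) ^ 2 - (k : ℝ) ^ 4) / 2 := by
  rw [lamM, pow_four_sub_cpow_one_half]
  simp [sq]
  ring

theorem I_mul_lamM_sub_I_im (k : ℤ) :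
    (I * lamM k - I).im = -1 - ((k : ℝ) ^ 2 + √((k : ℝ) ^ 4 - 4 * (k : ℝ) ^ 2)) / 2 := by
  rw [lamM, pow_four_sub_cpow_one_half]
  simp [sq]
  ring

theorem sqrt_pow_four_sub_mem_Icc (x : ℝ) : √(x ^ 4 - 4 * x ^ 2) ∈ Icc (x ^ 2 - 4) (x ^ 2) := by
  refine ⟨?_, Real.sqrt_le_iff.2 ⟨sq_nonneg x, by nlinarith [sq_nonneg x]⟩⟩
  rcases le_total (x ^ 2) 4 with hx | hx
  · exact (sub_nonpos.2 hx).trans (Real.sqrt_nonneg _)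
  · exact Real.le_sqrt_of_sq_le (by nlinarith)

theorem abs_im_I_mul_lamP_sub_I_mem_Icc (k : ℤ) : |(I * lamP k - I).im| ∈ Icc 1 3 := by
  obtain ⟨hlower, hupper⟩ := sqrt_pow_four_sub_mem_Icc k
  rw [I_mul_lamP_sub_I_im, abs_of_neg (by linarith)]
  constructor <;> linarith

theorem im_I_mul_lamM_sub_I_ne_zero (k : ℤ) : (I * lamM k - I).im ≠ 0 := by
  rw [I_mul_lamM_sub_I_im]
  have : 0 ≤ (k : ℝ) ^ 2 := sq_nonneg _
  linarith [Real.sqrt_nonneg ((k : ℝ) ^ 4 - 4 * (k : ℝ) ^ 2)]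

theorem abs_im_I_mul_lamM_sub_I_mem_Icc (k : ℤ) :
    |(I * lamM k - I).im| ∈ Icc ((k : ℝ) ^ 2 - 1) ((k : ℝ) ^ 2 + 1) := by
  obtain ⟨hlower, hupper⟩ := sqrt_pow_four_sub_mem_Icc k
  have hsq := sq_nonneg (k : ℝ)
  have hsqrt := Real.sqrt_nonneg ((k : ℝ) ^ 4 - 4 * (k : ℝ) ^ 2)
  rw [I_mul_lamM_sub_I_im, abs_of_neg (by linarith)]
  constructor <;> linarith

theorem sqrt_four_mul_sq_sub_pow_four_eq_zero {x : ℝ} (hx : 2 ≤ |x|) :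
    √(4 * x ^ 2 - x ^ 4) = 0 := by
  have hsq : 2 ^ 2 ≤ x ^ 2 := sq_le_sq.2 (by rwa [abs_two])
  exact Real.sqrt_eq_zero_of_nonpos (by nlinarith)

theorem tendsto_abs_intCast_atTop : Tendsto (fun k : ℤ => |(k : ℝ)|) cofinite atTop :=
  (tendsto_norm_cocompact_atTop (E := ℝ)).comp Int.tendsto_coe_cofinite

theorem eventually_I_mul_lamP_sub_I_re_eq : ∀ᶠ k : ℤ in cofinite, (I * lamP k - I).re = -k := by
  filter_upwards [tendsto_abs_intCast_atTop.eventually_ge_atTop 2] with k hk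
  rw [I_mul_lamP_sub_I_re, sqrt_four_mul_sq_sub_pow_four_eq_zero hk, zero_div, sub_zero]

theorem eventually_I_mul_lamM_sub_I_re_eq : ∀ᶠ k : ℤ in cofinite, (I * lamM k - I).re = -k := by
  filter_upwards [tendsto_abs_intCast_atTop.eventually_ge_atTop 2] with k hk
  rw [I_mul_lamM_sub_I_re, sqrt_four_mul_sq_sub_pow_four_eq_zero hk, zero_div, add_zero]

theorem tendsto_cobounded_of_re_eq_neg_intCast {z : ℤ → ℂ} (hz : ∀ᶠ k in cofinite, (z k).re = -k) :
    Tendsto z cofinite (cobounded ℂ) := by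
  refine tendsto_norm_atTop_iff_cobounded.1 (tendsto_atTop_mono' _ ?_ tendsto_abs_intCast_atTop)
  filter_upwards [hz] with k hk
  rw [← abs_neg, ← hk]
  exact abs_re_le_norm _

theorem tendsto_I_mul_lamP_sub_I :
    Tendsto (fun k => I * lamP k - I) cofinite (cobounded ℂ ⊓ 𝓟 {w | |w.im| ∈ Icc 1 3}) :=
  tendsto_inf.2 ⟨tendsto_cobounded_of_re_eq_neg_intCast eventually_I_mul_lamP_sub_I_re_eq,
    tendsto_principal.2 (Eventually.of_forall abs_im_I_mul_lamP_sub_I_mem_Icc)⟩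

theorem tendsto_I_mul_lamM_sub_I :
    Tendsto (fun k => I * lamM k - I) cofinite (cobounded ℂ ⊓ 𝓟 nearParabola) := by
  refine tendsto_inf.2
    ⟨tendsto_cobounded_of_re_eq_neg_intCast eventually_I_mul_lamM_sub_I_re_eq,
      tendsto_principal.2 ?_⟩
  filter_upwards [eventually_I_mul_lamM_sub_I_re_eq] with k hk
  rw [nearParabola, mem_ofPred_eq, hk, neg_sq]
  exact abs_im_I_mul_lamM_sub_I_mem_Icc k

theorem tendsto_ofReal_sub_I :
    Tendsto (fun x : ℝ => (x : ℂ) - I) (cocompact ℝ)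
      (cobounded ℂ ⊓ 𝓟 {w | |w.im| ∈ Icc 1 1}) := by
  refine tendsto_inf.2 ⟨tendsto_norm_atTop_iff_cobounded.1 ?_, tendsto_principal.2 ?_⟩
  · refine tendsto_atTop_mono (fun x => ?_) (tendsto_norm_cocompact_atTop (E := ℝ))
    simpa using abs_re_le_norm ((x : ℂ) - I)
  · simp

namespace IsLevelSequence

variable {a b : ℝ} {t : ℕ → ℝ}

theorem exists_norm_evenProduct_ofReal_sub_I_le (h : IsLevelSequence a b t) (ha : 0 < a)
    (hb : 0 < b) : ∃ C, ∀ x : ℝ, ‖evenProduct (fun n => t (n + 1)) (x - I)‖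
      ≤ C * ((1 + |x|) * Real.exp (-(b * π * √|x|))) := by
  have hpos : ∀ x : ℝ, 0 < (1 + |x|) * Real.exp (-(b * π * √|x|)) := fun x => by positivity
  have hfar : (fun x : ℝ => evenProduct (fun n => t (n + 1)) (x - I)) =O[cocompact ℝ]
      fun x => (1 + |x|) * Real.exp (-(b * π * √|x|)) := by
    refine ((h.evenProduct_isBigO_of_strip ha hb one_pos).comp_tendsto tendsto_ofReal_sub_I).trans
      (IsBigO.of_norm_le fun x => ?_)
    simp only [Function.comp_apply, sub_re, ofReal_re, I_re, sub_zero]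
    rw [Real.norm_of_nonneg (by positivity)]
    gcongr
    exact le_add_of_nonneg_left zero_le_one
  have hcont := (differentiable_evenProduct (h.summable_inv_sq hb.le)).continuous
  obtain ⟨C, hC⟩ := isBigO_top.1 <| isBigO_top_of_isBigO_cocompact
    (by fun_prop) (by fun_prop) (fun x => (hpos x).ne') hfar
  exact ⟨C, fun x => (hC x).trans_eq (by rw [Real.norm_of_nonneg (hpos x).le])⟩

theorem exists_le_norm_evenProduct_I_mul_lamP_sub_I (h : IsLevelSequence a b t) (ha : 0 < a)
    (hb : 0 < b) : ∃ C, ∀ k : ℤ, Real.exp (-(b * π * √|(k : ℝ)|)) / |(k : ℝ)| ^ 3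
      ≤ C * ‖evenProduct (fun n => t (n + 1)) (I * lamP k - I)‖ := by
  have hfar : (fun k : ℤ => Real.exp (-(b * π * √|(k : ℝ)|)) / |(k : ℝ)| ^ 3) =O[cofinite]
      fun k => evenProduct (fun n => t (n + 1)) (I * lamP k - I) := by
    refine ((h.isBigO_evenProduct_of_strip ha hb one_pos).comp_tendsto
      tendsto_I_mul_lamP_sub_I).congr' ?_ EventuallyEq.rfl
    filter_upwards [eventually_I_mul_lamP_sub_I_re_eq] with k hk
    rw [Function.comp_apply, hk, abs_neg]
  obtain ⟨C, -, hC⟩ := bound_of_isBigO_cofinite hfar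
  refine ⟨C, fun k => (le_abs_self _).trans (hC ?_)⟩
  exact evenProduct_ne_zero (h.summable_inv_sq hb.le)
    (abs_pos.1 (one_pos.trans_le (abs_im_I_mul_lamP_sub_I_mem_Icc k).1))

theorem exists_le_norm_evenProduct_I_mul_lamM_sub_I (h : IsLevelSequence a b t) (ha : 0 < a)
    (hb : 0 < b) : ∃ C, ∀ k : ℤ, Real.exp (a * π * (k : ℝ) ^ 2 - 2 * b * π * |(k : ℝ)|)
      ≤ C * ‖evenProduct (fun n => t (n + 1)) (I * lamM k - I)‖ := by
  have hfar : (fun k : ℤ => Real.exp (a * π * (k : ℝ) ^ 2 - 2 * b * π * |(k : ℝ)|)) =O[cofinite]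
      fun k => evenProduct (fun n => t (n + 1)) (I * lamM k - I) := by
    refine ((h.isBigO_evenProduct_of_nearParabola ha hb).comp_tendsto
      tendsto_I_mul_lamM_sub_I).congr' ?_ EventuallyEq.rfl
    filter_upwards [eventually_I_mul_lamM_sub_I_re_eq] with k hk
    rw [Function.comp_apply, hk, abs_neg, neg_sq]
  obtain ⟨C, -, hC⟩ := bound_of_isBigO_cofinite hfar
  refine ⟨C, fun k => (le_abs_self _).trans (hC ?_)⟩
  exact evenProduct_ne_zero (h.summable_inv_sq hb.le) (im_I_mul_lamM_sub_I_ne_zero k)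

theorem exists_evenProduct_sub_I_estimates (h : IsLevelSequence a b t) (ha : 0 < a) (hb : 0 < b) :
    ∃ C > 0,
      (∀ x : ℝ, ‖evenProduct (fun n => t (n + 1)) (x - I)‖
        ≤ C * (1 + |x|) * Real.exp (-(b * π * √|x|))) ∧
      (∀ k : ℤ, Real.exp (-(b * π * √|(k : ℝ)|)) / (C * |(k : ℝ)| ^ 3)
        ≤ ‖evenProduct (fun n => t (n + 1)) (I * lamP k - I)‖) ∧
      ∀ k : ℤ, Real.exp (a * π * (k : ℝ) ^ 2 - 2 * b * π * |(k : ℝ)|) / C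
        ≤ ‖evenProduct (fun n => t (n + 1)) (I * lamM k - I)‖ := by
  obtain ⟨A, hA⟩ := h.exists_norm_evenProduct_ofReal_sub_I_le ha hb
  obtain ⟨B, hB⟩ := h.exists_le_norm_evenProduct_I_mul_lamP_sub_I ha hb
  obtain ⟨D, hD⟩ := h.exists_le_norm_evenProduct_I_mul_lamM_sub_I ha hb
  have hAC : A ≤ |A| + |B| + |D| + 1 := by linarith [le_abs_self A, abs_nonneg B, abs_nonneg D]
  have hBC : B ≤ |A| + |B| + |D| + 1 := by linarith [le_abs_self B, abs_nonneg A, abs_nonneg D]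
  have hDC : D ≤ |A| + |B| + |D| + 1 := by linarith [le_abs_self D, abs_nonneg A, abs_nonneg B]
  have hC : 0 < |A| + |B| + |D| + 1 := by positivity
  refine ⟨|A| + |B| + |D| + 1, hC, fun x => ?_, fun k => ?_, fun k => ?_⟩
  · rw [mul_assoc]
    exact (hA x).trans (by gcongr)
  · rw [div_mul_eq_div_div_swap, div_le_iff₀' hC]
    exact (hB k).trans (by gcongr)
  · rw [div_le_iff₀' hC]
    exact (hD k).trans (by gcongr)

end IsLevelSequence

theorem norm_evenProduct_sub_I_le_exp {a : ℝ} {s : ℕ → ℝ} (hs : ∀ n : ℕ, (n : ℝ) + 1 ≤ a * s n)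
    (ha : 0 < a) (z : ℂ) :
    ‖evenProduct s (z - I)‖ ≤ Real.exp (a * π) * Real.exp (a * π * ‖z‖) := by
  refine (norm_evenProduct_le_exp hs ha _).trans ?_
  rw [← Real.exp_add, ← mul_one_add]
  gcongr
  exact (norm_sub_le _ _).trans_eq (by rw [norm_I, add_comm])

theorem multiplier_estimates_general {a b : ℝ} (ha : 0 < a) (hb : 0 < b) {τ : ℕ → ℝ}
    (hτ : ∀ n : ℕ, 1 ≤ n → (b / a) ^ 2 ≤ τ n ∧ a * τ n - b * √(τ n) = n) {m : ℂ → ℂ}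
    (hm : m = fun z : ℂ => ∏' n : ℕ, (1 - (z - I) ^ 2 / ((τ (n + 1) : ℝ) : ℂ) ^ 2)) :
    (∀ z : ℂ, Multipliable fun n : ℕ => 1 - (z - I) ^ 2 / ((τ (n + 1) : ℝ) : ℂ) ^ 2) ∧
    Differentiable ℂ m ∧
    (∀ z, ‖m z‖ ≤ Real.exp (a * π) * Real.exp (a * π * ‖z‖)) ∧
    ∃ C > 0,
      (∀ x : ℝ, ‖m x‖ ≤ C * (1 + |x|) * Real.exp (-(b * π * √|x|))) ∧
      (∀ k : ℤ, Real.exp (-(b * π * √|(k : ℝ)|)) / (C * |(k : ℝ)| ^ 3) ≤ ‖m (I * lamP k)‖) ∧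
      ∀ k : ℤ, Real.exp (a * π * (k : ℝ) ^ 2 - 2 * b * π * |(k : ℝ)|) / C
        ≤ ‖m (I * lamM k)‖ := by
  obtain ⟨t, ht, hτt⟩ := exists_isLevelSequence_of_succ ha hb.le hτ
  have hsum := ht.summable_inv_sq hb.le
  simp only [hτt] at hm ⊢
  subst hm
  exact ⟨fun z => multipliable_one_sub_sq_div_sq hsum (z - I),
    (differentiable_evenProduct hsum).comp (differentiable_id.sub_const I),
    norm_evenProduct_sub_I_le_exp (ht.add_one_le hb.le) ha,
    ht.exists_evenProduct_sub_I_estimates ha hb⟩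

end

/-- **Estimates on the multiplier `m(z) = ∏_{n≥1} (1 - (z-i)²/τ_n²)`.**
Here `T > 2π`, `a = T/(2π) - 1`, `b = √2`, `B = (b/a)²`, and `τ_n > B` is the unique
solution of `a·τ_n - b·√τ_n = n`.  The function `m` is entire of exponential type at most
`aπ`, satisfies `|m(x)| ≤ C(1+|x|)e^{-√2 π √|x|}` on ℝ, and admits the stated lower
bounds at the points `iλ_k^±`. -/
theorem multiplier_estimates
    (T : ℝ) (hT : 2 * π < T)
    (a : ℝ) (haT : a = T / (2 * π) - 1)
    (τ : ℕ → ℝ)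
    (hτ : ∀ n : ℕ, 1 ≤ n →
      (Real.sqrt 2 / a)^2 < τ n ∧ a * τ n - Real.sqrt 2 * Real.sqrt (τ n) = n)
    (m : ℂ → ℂ)
    (hm : m = fun z : ℂ => ∏' n : ℕ, (1 - (z - Complex.I)^2 / ((τ (n+1) : ℝ) : ℂ)^2)) :
    (∀ z : ℂ, Multipliable
        (fun n : ℕ => 1 - (z - Complex.I)^2 / ((τ (n+1) : ℝ) : ℂ)^2)) ∧
    Differentiable ℂ m ∧
    -- exponential type at most aπ
    (∀ ε > (0:ℝ), ∃ C > (0:ℝ), ∀ z : ℂ, ‖m z‖ ≤ C * Real.exp ((a * π + ε) * ‖z‖)) ∧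
    ∃ C > (0:ℝ),
      -- (a) decay on the real axis
      (∀ x : ℝ, ‖m (x:ℂ)‖ ≤ C * (1 + |x|) * Real.exp (-(Real.sqrt 2 * π * Real.sqrt |x|))) ∧
      -- (b) lower bound at the hyperbolic points
      (∀ k : ℤ, k ≠ 0 →
        Real.exp (-(Real.sqrt 2 * π * Real.sqrt |(k:ℝ)|)) / (C * |(k:ℝ)|^3)
          ≤ ‖m (Complex.I * lamP k)‖) ∧
      -- (c) lower bound at the parabolic points
      (∀ k : ℤ, k ≠ 0 →
        Real.exp (a * π * (k:ℝ)^2 - 2 * Real.sqrt 2 * π * |(k:ℝ)|) / C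
          ≤ ‖m (Complex.I * lamM k)‖) := by
  have ha : 0 < a := by rwa [haT, sub_pos, one_lt_div two_pi_pos]
  obtain ⟨hmult, hdiff, hexp, C, hC, hreal, hlamP, hlamM⟩ := multiplier_estimates_general ha
    (sqrt_pos.2 two_pos) (fun n hn => ⟨(hτ n hn).1.le, (hτ n hn).2⟩) hm
  refine ⟨hmult, hdiff, fun ε hε => ⟨exp (a * π), exp_pos _, fun z => (hexp z).trans ?_⟩,
    C, hC, hreal, fun k _ => hlamP k, fun k _ => hlamM k⟩
  gcongr
  exact le_add_of_nonneg_right hε.le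
end

section
/- Define P₂(z) = z·∏_{k∈ℤ∖{0}} (1 + z/(iλ_k^-)), an absolutely convergent product (since |λ_k^-| ≍ k²) defining an entire function. Then there exist constants C > 0 and c > 0 such that: (a) |P₂(z)| ≤ C e^{2π√|z|} for every z ∈ ℂ; (b) |P₂(x)| ≤ C e^{√2·π·√|x|} for every x ∈ ℝ; (c) |P₂(−iλ_k^+)| ≥ c e^{√2·π·√|k|} for every k ∈ ℤ∖{0, ±2}. -/
open Real

/-- The canonical product over the parabolic branch:
`P₂(z) = z ∏_{k ≠ 0} (1 + z/(iλ_k⁻))` (absolutely convergent product). -/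
noncomputable def P₂ (z : ℂ) : ℂ :=
  z * ∏' k : {k : ℤ // k ≠ 0}, (1 + z / (Complex.I * lamM k.1))

/-! With `w = iz` the factors of `P₂` become `1 - w / λ_k⁻`, and `λ_k⁻` stays within bounded
distance of `ν_k = -(k - i/2)²`. The product over the `ν_k` is explicit: by Euler's sine product,
`∏_{k ∈ ℤ} (1 - s² / ν_k) = sinh (π (1/2 - s)) sinh (π (1/2 + s)) / sinh² (π/2)`, which has size
`e^{2π |Re s|}`. Moving the zeros and the evaluation point by a bounded amount, with every zero
remaining at distance at least `k²/4` from both the origin and the evaluation point in the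
dominating product, changes the `k`-th factor by `e^{O(1/k²)}`, hence the product by a bounded
factor. The three exponents are then the values of `2π Re √w` at `w = |z|`, at `w = ix` and at
`w = λ_k⁺`, where `Re √w = √((|w| + Re w) / 2)`. -/

open Filter Topology

theorem le_exp_tsum_mul_of_hasProd {ι : Type*} {f g ε : ι → ℝ} {x y : ℝ} (hf : HasProd f x)
    (hg : HasProd g y) (hε : Summable ε) (hf₀ : ∀ i, 0 ≤ f i)
    (hfg : ∀ i, f i ≤ rexp (ε i) * g i) : x ≤ rexp (∑' i, ε i) * y :=
  le_of_tendsto_of_tendsto' hf (hε.hasSum.rexp.mul hg)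
    fun _ => Finset.prod_le_prod (fun i _ => hf₀ i) fun i _ => hfg i

theorem le_exp_div_mul_of_le_add {A B d r : ℝ} (hr : 0 < r) (hd : 0 ≤ d) (hB : r ≤ B)
    (hA : A ≤ B + d) : A ≤ rexp (d / r) * B := by
  have hdB : d ≤ d / r * B := by
    rw [div_mul_eq_mul_div, le_div_iff₀ hr]
    gcongr
  calc A ≤ (d / r + 1) * B := by linarith
    _ ≤ rexp (d / r) * B := by gcongr; exacts [hr.le.trans hB, add_one_le_exp _]

/-- The canonical product of genus zero with zeros `a i`, normalised to be `1` at the origin. It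
converges when `∑ ‖a i‖⁻¹` does; a vanishing `a i` contributes the factor `1`, as `z / 0 = 0`. -/
noncomputable def canonicalProd {ι : Type*} (a : ι → ℂ) (z : ℂ) : ℂ :=
  ∏' i, (1 - z / a i)

section CanonicalProd

variable {ι : Type*} {a : ι → ℂ}

theorem summable_norm_div (ha : Summable fun i => ‖a i‖⁻¹) (z : ℂ) :
    Summable fun i => ‖-(z / a i)‖ := by
  simpa only [norm_neg, norm_mul, norm_inv, div_eq_mul_inv] using ha.mul_left ‖z‖

theorem hasProd_canonicalProd (ha : Summable fun i => ‖a i‖⁻¹) (z : ℂ) :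
    HasProd (fun i => 1 - z / a i) (canonicalProd a z) := by
  simpa only [canonicalProd, sub_eq_add_neg] using
    (multipliable_one_add_of_summable (summable_norm_div ha z)).hasProd

theorem canonicalProd_ne_zero (ha : Summable fun i => ‖a i‖⁻¹) {z : ℂ} (hz : ∀ i, z ≠ a i) :
    canonicalProd a z ≠ 0 := by
  simp only [canonicalProd, sub_eq_add_neg]
  refine tprod_one_add_ne_zero_of_summable (fun i h => hz i ?_) (summable_norm_div ha z)
  exact eq_of_div_eq_one (add_neg_eq_zero.mp h).symm

theorem differentiable_canonicalProd (ha : Summable fun i => ‖a i‖⁻¹) :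
    Differentiable ℂ (canonicalProd a) := by
  intro z
  have hunif : HasProdLocallyUniformlyOn (fun i w => 1 + -(w / a i))
      (fun w => ∏' i, (1 + -(w / a i))) (Metric.ball 0 (‖z‖ + 1)) := by
    refine Summable.hasProdLocallyUniformlyOn_one_add Metric.isOpen_ball (ha.mul_left (‖z‖ + 1))
      (.of_forall fun i w hw => ?_) fun i => by fun_prop
    rw [norm_neg, norm_div, div_eq_mul_inv]
    gcongr
    exact (mem_ball_zero_iff.mp hw).le
  simp only [← sub_eq_add_neg] at hunif
  exact (hunif.differentiableOn (.of_forall fun s => by fun_prop)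
    Metric.isOpen_ball).differentiableAt (Metric.isOpen_ball.mem_nhds (by simp))

theorem norm_canonicalProd_le_of_norm_sub_le {b : ι → ℂ} {r : ι → ℝ} {d : ℝ} {z w : ℂ}
    (hr : ∀ i, 0 < r i) (hsum : Summable fun i => (r i)⁻¹) (hd : 0 ≤ d)
    (ha : ∀ i, r i ≤ ‖a i‖) (hb : ∀ i, r i ≤ ‖b i‖) (hw : ∀ i, r i ≤ ‖b i - w‖)
    (hba : ∀ i, ‖b i‖ ≤ ‖a i‖ + d) (hzw : ∀ i, ‖a i - z‖ ≤ ‖b i - w‖ + d) :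
    ‖canonicalProd a z‖ ≤ rexp (2 * d * ∑' i, (r i)⁻¹) * ‖canonicalProd b w‖ := by
  have hsummable {c : ι → ℂ} (hc : ∀ i, r i ≤ ‖c i‖) : Summable fun i => ‖c i‖⁻¹ :=
    hsum.of_nonneg_of_le (fun i => by positivity) fun i => inv_anti₀ (hr i) (hc i)
  have hnorm {c : ι → ℂ} (hc : ∀ i, r i ≤ ‖c i‖) (u : ℂ) (i : ι) :
      ‖1 - u / c i‖ = ‖c i - u‖ / ‖c i‖ := by
    have hci : c i ≠ 0 := norm_pos_iff.mp ((hr i).trans_le (hc i))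
    rw [← norm_div, sub_div, div_self hci]
  rw [← tsum_mul_left]
  refine le_exp_tsum_mul_of_hasProd (hasProd_canonicalProd (hsummable ha) z).norm
    (hasProd_canonicalProd (hsummable hb) w).norm (hsum.mul_left _) (fun i => norm_nonneg _)
    fun i => ?_
  have ha₀ : 0 < ‖a i‖ := (hr i).trans_le (ha i)
  have hb₀ : 0 < ‖b i‖ := (hr i).trans_le (hb i)
  rw [hnorm ha, hnorm hb, mul_div_assoc', div_le_div_iff₀ ha₀ hb₀]
  calc ‖a i - z‖ * ‖b i‖
      ≤ (rexp (d / r i) * ‖b i - w‖) * (rexp (d / r i) * ‖a i‖) := by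
        gcongr
        · exact le_exp_div_mul_of_le_add (hr i) hd (hw i) (hzw i)
        · exact le_exp_div_mul_of_le_add (hr i) hd (ha i) (hba i)
    _ = rexp (2 * d * (r i)⁻¹) * ‖b i - w‖ * ‖a i‖ := by
        rw [show 2 * d * (r i)⁻¹ = d / r i + d / r i by ring, exp_add]
        ring

end CanonicalProd

/-- The `N`-th partial product of Euler's product for `sin (π x)`. -/
noncomputable def eulerSinProd (N : ℕ) (x : ℂ) : ℂ :=
  π * x * ∏ j ∈ Finset.range N, (1 - x ^ 2 / ((j : ℂ) + 1) ^ 2)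

theorem prod_Icc_one_sub_sq_div_sq_mul {b : ℂ} (hb : ∀ k : ℤ, k + b ≠ 0) (t : ℂ) (N : ℕ) :
    (∏ k ∈ Finset.Icc (-N : ℤ) N, (1 - t ^ 2 / (k + b) ^ 2)) * eulerSinProd N b ^ 2 =
      eulerSinProd N (b - t) * eulerSinProd N (b + t) := by
  induction N with
  | zero =>
    have hb₀ : b ≠ 0 := by simpa only [Int.cast_zero, zero_add] using hb 0
    simp only [eulerSinProd, Nat.cast_zero, neg_zero, Finset.Icc_self, Finset.prod_singleton,
      Int.cast_zero, zero_add, Finset.range_zero, Finset.prod_empty, mul_one]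
    field_simp
    ring
  | succ N ih =>
    have hsucc (x : ℂ) : eulerSinProd (N + 1) x =
        eulerSinProd N x * (1 - x ^ 2 / ((N : ℂ) + 1) ^ 2) := by
      rw [eulerSinProd, Finset.prod_range_succ, ← mul_assoc, eulerSinProd]
    have hpos : (N : ℂ) + 1 + b ≠ 0 := by exact_mod_cast hb (N + 1)
    have hneg : -((N : ℂ) + 1) + b ≠ 0 := by exact_mod_cast hb (-(N + 1))
    have hN : (N : ℂ) + 1 ≠ 0 := Nat.cast_add_one_ne_zero N
    have hpair : (1 - t ^ 2 / (-((N : ℂ) + 1) + b) ^ 2) * (1 - t ^ 2 / ((N : ℂ) + 1 + b) ^ 2) *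
        (1 - b ^ 2 / ((N : ℂ) + 1) ^ 2) ^ 2 =
        (1 - (b - t) ^ 2 / ((N : ℂ) + 1) ^ 2) * (1 - (b + t) ^ 2 / ((N : ℂ) + 1) ^ 2) := by
      field_simp
      ring
    rw [Nat.cast_succ, Finset.Icc_succ_succ, Finset.prod_union (by simp),
      Finset.prod_pair (by lia), hsucc, hsucc, hsucc]
    push_cast
    linear_combination (1 - (b - t) ^ 2 / ((N : ℂ) + 1) ^ 2) *
      (1 - (b + t) ^ 2 / ((N : ℂ) + 1) ^ 2) * ih +
      (∏ k ∈ Finset.Icc (-N : ℤ) N, (1 - t ^ 2 / ((k : ℂ) + b) ^ 2)) * eulerSinProd N b ^ 2 * hpair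

theorem hasProd_int_one_sub_sq_div_sq {b : ℂ} (hb : Complex.sin (π * b) ≠ 0) (t : ℂ) :
    HasProd (fun k : ℤ => 1 - t ^ 2 / (k + b) ^ 2)
      (Complex.sin (π * (b - t)) * Complex.sin (π * (b + t)) / Complex.sin (π * b) ^ 2) := by
  have hkb (k : ℤ) : k + b ≠ 0 := fun h => hb <| by
    rw [eq_neg_of_add_eq_zero_right h, mul_neg, Complex.sin_neg, mul_comm, Complex.sin_int_mul_pi,
      neg_zero]
  have hsum : Summable fun k : ℤ => ‖((k + b) ^ 2)‖⁻¹ := by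
    have h := (EisensteinSeries.linear_right_summable b 1 le_rfl).norm
    norm_cast at h
    simpa only [norm_inv, Int.cast_one, one_mul, add_comm] using h
  have hprod := hasProd_canonicalProd hsum (t ^ 2)
  have hIcc : Tendsto (fun N : ℕ => Finset.Icc (-N : ℤ) N) atTop atTop :=
    Finset.tendsto_Icc_neg_atTop_atTop.comp tendsto_natCast_atTop_atTop
  have hlim (x : ℂ) : Tendsto (eulerSinProd · x) atTop (𝓝 (Complex.sin (π * x))) :=
    Complex.tendsto_euler_sin_prod x
  have heq : canonicalProd (fun k : ℤ => (k + b) ^ 2) (t ^ 2) * Complex.sin (π * b) ^ 2 =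
      Complex.sin (π * (b - t)) * Complex.sin (π * (b + t)) :=
    tendsto_nhds_unique ((hprod.comp hIcc).mul ((hlim b).pow 2)) <|
      ((hlim (b - t)).mul (hlim (b + t))).congr fun N =>
        (prod_Icc_one_sub_sq_div_sq_mul hkb t N).symm
  rwa [← heq, mul_div_cancel_right₀ _ (pow_ne_zero 2 hb)]

/-- The points `-(k - i/2)²`, obtained by completing the square in `λ_k⁻ ≈ -k² + ik`. They stay at
bounded distance from the parabolic branch, and their canonical product is elementary. -/
noncomputable def modelRoot (k : ℤ) : ℂ :=
  -(k - Complex.I / 2) ^ 2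

theorem modelRoot_eq (k : ℤ) : modelRoot k = -(k : ℂ) ^ 2 + k * Complex.I + 1 / 4 := by
  rw [modelRoot]
  linear_combination (-1 / 4 : ℂ) * Complex.I_sq

theorem norm_modelRoot (k : ℤ) : ‖modelRoot k‖ = (k : ℝ) ^ 2 + 1 / 4 := by
  have h : (k : ℂ) - Complex.I / 2 = (k : ℝ) + (-1 / 2 : ℝ) * Complex.I := by push_cast; ring
  rw [modelRoot, norm_neg, norm_pow, h, Complex.sq_norm, Complex.normSq_add_mul_I]
  norm_num

theorem canonicalProd_modelRoot_sq (s : ℂ) :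
    canonicalProd modelRoot (s ^ 2) =
      Complex.sinh (π * (1 / 2 - s)) * Complex.sinh (π * (1 / 2 + s)) /
        (Real.sinh (π / 2) : ℂ) ^ 2 := by
  have hsin (x : ℂ) : Complex.sin (π * (-Complex.I * x)) = -Complex.sinh (π * x) * Complex.I := by
    rw [← Complex.sinh_neg, ← Complex.sin_mul_I]
    ring_nf
  have hsin_half : Complex.sin (π * (-Complex.I * (1 / 2))) =
      -(Real.sinh (π / 2) : ℂ) * Complex.I := by
    rw [hsin]
    push_cast
    ring_nf
  have hsinh : (Real.sinh (π / 2) : ℂ) ≠ 0 :=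
    Complex.ofReal_ne_zero.mpr (Real.sinh_pos_iff.mpr (by positivity)).ne'
  have hsin_ne : Complex.sin (π * (-Complex.I * (1 / 2))) ≠ 0 := by
    rw [hsin_half]
    exact mul_ne_zero (neg_ne_zero.mpr hsinh) Complex.I_ne_zero
  refine HasProd.tprod_eq ?_
  rw [← neg_div_neg_eq]
  convert hasProd_int_one_sub_sq_div_sq hsin_ne (-Complex.I * s) using 2 with k
  · rw [modelRoot, mul_pow, neg_sq, Complex.I_sq, div_neg, neg_one_mul, neg_div]
    ring_nf
  · rw [← mul_sub, ← mul_add, hsin, hsin]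
    linear_combination (-Complex.sinh (π * (1 / 2 - s)) * Complex.sinh (π * (1 / 2 + s))) *
      Complex.I_sq
  · rw [hsin_half, mul_pow, neg_sq, Complex.I_sq, mul_neg_one]

theorem summable_inv_int_sq_div (c : ℝ) :
    Summable fun k : {k : ℤ // k ≠ 0} => ((k : ℝ) ^ 2 / c)⁻¹ := by
  have h := (Real.summable_one_div_int_pow.mpr one_lt_two).subtype (fun k : ℤ => k ≠ 0)
  simpa [Function.comp_def, div_eq_mul_inv] using h.mul_left c

theorem summable_inv_norm_modelRoot : Summable fun k : ℤ => ‖modelRoot k‖⁻¹ := by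
  have h := (EisensteinSeries.linear_right_summable (-Complex.I / 2) 1 le_rfl).norm
  norm_cast at h
  simpa only [modelRoot, norm_neg, norm_inv, Int.cast_one, one_mul, neg_div, neg_add_eq_sub] using h

theorem one_sub_four_mul_canonicalProd_modelRoot (w : ℂ) :
    (1 - 4 * w) * canonicalProd (fun k : {k : ℤ // k ≠ 0} => modelRoot k) w =
      canonicalProd modelRoot w := by
  let f : ℤ → ℂ := fun k => 1 - w / modelRoot k
  have hzero : HasProd (f ∘ ((↑) : ({0} : Set ℤ) → ℤ)) (f 0) := hasProd_singleton 0 f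
  have hcompl : HasProd (f ∘ ((↑) : ↑({0}ᶜ : Set ℤ) → ℤ))
      (canonicalProd (fun k : {k : ℤ // k ≠ 0} => modelRoot k) w) :=
    hasProd_canonicalProd (summable_inv_norm_modelRoot.subtype _) w
  have hf₀ : f 0 = 1 - 4 * w := by
    simp only [f, modelRoot_eq, Int.cast_zero]
    ring
  rw [← hf₀]
  exact (hzero.mul_compl hcompl).unique (hasProd_canonicalProd summable_inv_norm_modelRoot w)

theorem norm_sinh_le (u : ℂ) : ‖Complex.sinh u‖ ≤ rexp |u.re| := by
  have hexp (v : ℂ) (hv : v.re ≤ |u.re|) : ‖Complex.exp v‖ ≤ rexp |u.re| := by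
    rw [Complex.norm_exp]
    gcongr
  rw [Complex.sinh, norm_div, Complex.norm_two, div_le_iff₀ two_pos, mul_two]
  exact norm_sub_le_of_le (hexp u (le_abs_self _)) (hexp (-u) (neg_le_abs _))

theorem sinh_abs_re_le_norm_sinh (u : ℂ) : Real.sinh |u.re| ≤ ‖Complex.sinh u‖ := by
  have h := abs_norm_sub_norm_le (Complex.exp u) (Complex.exp (-u))
  rw [Complex.norm_exp, Complex.norm_exp, Complex.neg_re] at h
  rw [← Real.abs_sinh, Real.sinh_eq, Complex.sinh, norm_div, Complex.norm_two, abs_div, abs_two]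
  gcongr

theorem exp_div_four_le_sinh {x : ℝ} (hx : 1 / 2 ≤ x) : rexp x / 4 ≤ Real.sinh x := by
  have hsplit : rexp x = rexp (2 * x) * rexp (-x) := by rw [← exp_add]; ring_nf
  have htwo : 2 * rexp (-x) ≤ rexp x := by
    rw [hsplit]
    gcongr
    linarith [add_one_le_exp (2 * x)]
  rw [Real.sinh_eq]
  linarith

theorem norm_canonicalProd_modelRoot_sq (s : ℂ) :
    ‖canonicalProd modelRoot (s ^ 2)‖ = ‖Complex.sinh (π * (1 / 2 - s))‖ *
      ‖Complex.sinh (π * (1 / 2 + s))‖ / Real.sinh (π / 2) ^ 2 := by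
  rw [canonicalProd_modelRoot_sq, norm_div, norm_mul, norm_pow, Complex.norm_real, norm_eq_abs,
    sq_abs]

theorem abs_re_pi_mul_half_sub (s : ℂ) :
    |((π : ℂ) * (1 / 2 - s)).re| = π * |1 / 2 - s.re| := by
  simp [abs_mul, abs_of_pos pi_pos]

theorem abs_re_pi_mul_half_add (s : ℂ) :
    |((π : ℂ) * (1 / 2 + s)).re| = π * |1 / 2 + s.re| := by
  simp [abs_mul, abs_of_pos pi_pos]

theorem norm_canonicalProd_modelRoot_sq_le (s : ℂ) :
    ‖canonicalProd modelRoot (s ^ 2)‖ ≤ rexp π * rexp (2 * π * |s.re|) := by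
  have hone : 1 ≤ Real.sinh (π / 2) :=
    (by linarith [pi_gt_three] : 1 ≤ π / 2).trans (self_le_sinh_iff.mpr (by positivity))
  have hsub := abs_sub (1 / 2) s.re
  have hadd := abs_add_le (1 / 2) s.re
  rw [abs_of_pos (one_half_pos (α := ℝ))] at hsub hadd
  calc ‖canonicalProd modelRoot (s ^ 2)‖
      ≤ ‖Complex.sinh (π * (1 / 2 - s))‖ * ‖Complex.sinh (π * (1 / 2 + s))‖ := by
        rw [norm_canonicalProd_modelRoot_sq]
        exact div_le_self (by positivity) (one_le_pow₀ hone)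
    _ ≤ rexp (π * |1 / 2 - s.re|) * rexp (π * |1 / 2 + s.re|) := by
        rw [← abs_re_pi_mul_half_sub, ← abs_re_pi_mul_half_add]
        gcongr <;> exact norm_sinh_le _
    _ ≤ rexp (π * (1 / 2 + |s.re|)) * rexp (π * (1 / 2 + |s.re|)) := by gcongr
    _ = rexp π * rexp (2 * π * |s.re|) := by
        rw [← exp_add, ← exp_add]
        ring_nf

theorem le_norm_canonicalProd_modelRoot_sq {s : ℂ} (hs : 7 / 10 ≤ s.re) :
    rexp (2 * π * s.re) / (4 * rexp π) ≤ ‖canonicalProd modelRoot (s ^ 2)‖ := by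
  have hsinh_le {u : ℂ} (hu : 1 / 2 ≤ |u.re|) : rexp |u.re| / 4 ≤ ‖Complex.sinh u‖ :=
    (exp_div_four_le_sinh hu).trans (sinh_abs_re_le_norm_sinh u)
  have hsub : |((π : ℂ) * (1 / 2 - s)).re| = π * (s.re - 1 / 2) := by
    rw [abs_re_pi_mul_half_sub, abs_sub_comm, abs_of_nonneg (by linarith)]
  have hadd : |((π : ℂ) * (1 / 2 + s)).re| = π * (1 / 2 + s.re) := by
    rw [abs_re_pi_mul_half_add, abs_of_nonneg (by linarith)]
  have hden : Real.sinh (π / 2) ≤ rexp (π / 2) / 2 := by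
    rw [Real.sinh_eq]
    linarith [exp_pos (-(π / 2))]
  calc rexp (2 * π * s.re) / (4 * rexp π)
      = (rexp (π * (s.re - 1 / 2)) / 4) * (rexp (π * (1 / 2 + s.re)) / 4) /
          (rexp (π / 2) / 2) ^ 2 := by
        rw [div_pow, ← exp_nat_mul, div_mul_div_comm, ← exp_add]
        field_simp
        ring_nf
    _ ≤ ‖Complex.sinh (π * (1 / 2 - s))‖ * ‖Complex.sinh (π * (1 / 2 + s))‖ /
          Real.sinh (π / 2) ^ 2 := by
        rw [← hsub, ← hadd]
        gcongr
        · exact hsinh_le (by rw [hsub]; nlinarith [pi_gt_three])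
        · exact hsinh_le (by rw [hadd]; nlinarith [pi_gt_three])
    _ = ‖canonicalProd modelRoot (s ^ 2)‖ := (norm_canonicalProd_modelRoot_sq s).symm

theorem re_intCast_sq (k : ℤ) : ((k : ℂ) ^ 2).re = (k : ℝ) ^ 2 := by
  norm_cast

/-- The bounded correction `δ_k = (k² - √(k⁴ - 4k²))/2`, in terms of which the two branches are
`λ_k⁺ = ik - δ_k` and `λ_k⁻ = -k² + ik + δ_k`. -/
noncomputable def branchShift (k : ℤ) : ℂ :=
  ((k : ℂ) ^ 2 - ((k : ℂ) ^ 4 - 4 * (k : ℂ) ^ 2) ^ ((1 : ℂ) / 2)) / 2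

theorem lamP_eq (k : ℤ) : lamP k = k * Complex.I - branchShift k := by
  rw [lamP, branchShift]
  ring

theorem lamM_eq (k : ℤ) : lamM k = -(k : ℂ) ^ 2 + k * Complex.I + branchShift k := by
  rw [lamM, branchShift]
  ring

theorem re_lamP (k : ℤ) : (lamP k).re = -(branchShift k).re := by
  simp [lamP_eq]

theorem im_lamP (k : ℤ) : (lamP k).im = k - (branchShift k).im := by
  simp [lamP_eq]

theorem re_lamM (k : ℤ) : (lamM k).re = (branchShift k).re - (k : ℝ) ^ 2 := by
  simp [lamM_eq, re_intCast_sq, neg_add_eq_sub]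

theorem im_lamM (k : ℤ) : (lamM k).im = k + (branchShift k).im := by
  have hsq : ((k : ℂ) ^ 2).im = 0 := by norm_cast
  simp [lamM_eq, hsq]

theorem branchShift_mul_sq_sub (k : ℤ) :
    branchShift k * ((k : ℂ) ^ 2 - branchShift k) = (k : ℂ) ^ 2 := by
  have hroot : (((k : ℂ) ^ 4 - 4 * (k : ℂ) ^ 2) ^ ((1 : ℂ) / 2)) ^ 2 =
      (k : ℂ) ^ 4 - 4 * (k : ℂ) ^ 2 := by simp
  rw [branchShift]
  linear_combination (-1 / 4 : ℂ) * hroot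

theorem re_branchShift_le (k : ℤ) : (branchShift k).re ≤ (k : ℝ) ^ 2 / 2 := by
  have hroot : 0 ≤ (((k : ℂ) ^ 4 - 4 * (k : ℂ) ^ 2) ^ ((1 : ℂ) / 2)).re := by
    rw [one_div, Complex.cpow_inv_two_re]
    positivity
  rw [branchShift, Complex.div_ofNat_re, Complex.sub_re, re_intCast_sq]
  linarith

theorem norm_branchShift_le_two {k : ℤ} (hk : k ≠ 0) : ‖branchShift k‖ ≤ 2 := by
  have hpos : 0 < (k : ℝ) ^ 2 := by positivity
  have hre : (k : ℝ) ^ 2 / 2 ≤ ‖(k : ℂ) ^ 2 - branchShift k‖ := by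
    refine le_trans ?_ (Complex.re_le_norm _)
    rw [Complex.sub_re, re_intCast_sq]
    linarith [re_branchShift_le k]
  have hmul : ‖branchShift k‖ * ‖(k : ℂ) ^ 2 - branchShift k‖ = (k : ℝ) ^ 2 := by
    rw [← norm_mul, branchShift_mul_sq_sub]
    simp
  nlinarith [norm_nonneg (branchShift k)]

theorem branchShift_of_two_le_abs {k : ℤ} (hk : 2 ≤ |k|) :
    (branchShift k).im = 0 ∧ 1 ≤ (branchShift k).re := by
  have hk' : (4 : ℝ) ≤ (k : ℝ) ^ 2 := by
    exact_mod_cast (by nlinarith [sq_abs k] : 4 ≤ k ^ 2)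
  have hdisc : (0 : ℝ) ≤ (k : ℝ) ^ 4 - 4 * (k : ℝ) ^ 2 := by nlinarith
  have hreal : branchShift k = (((k : ℝ) ^ 2 - √((k : ℝ) ^ 4 - 4 * (k : ℝ) ^ 2)) / 2 : ℝ) := by
    rw [branchShift, sqrt_eq_rpow]
    push_cast [Complex.ofReal_cpow hdisc]
    rfl
  have hsqrt : √((k : ℝ) ^ 4 - 4 * (k : ℝ) ^ 2) ≤ (k : ℝ) ^ 2 - 2 :=
    sqrt_le_iff.mpr ⟨by linarith, by nlinarith⟩
  rw [hreal, Complex.ofReal_im, Complex.ofReal_re]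
  exact ⟨rfl, by linarith⟩

theorem branchShift_of_abs_eq_one {k : ℤ} (hk : |k| = 1) :
    (branchShift k).re = 1 / 2 ∧ (branchShift k).im = -(√3 / 2) := by
  have hk' : (k : ℂ) ^ 2 = 1 := by exact_mod_cast (by rw [← sq_abs, hk, one_pow] : k ^ 2 = 1)
  have hdisc : (k : ℂ) ^ 4 - 4 * (k : ℂ) ^ 2 = ((-3 : ℝ) : ℂ) := by
    push_cast
    linear_combination ((k : ℂ) ^ 2 - 3) * hk'
  have hroot : ((-3 : ℝ) : ℂ) ^ ((1 : ℂ) / 2) = √3 * Complex.I := by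
    rw [one_div]
    apply Complex.ext
    · rw [Complex.cpow_inv_two_re]; simp
    · rw [Complex.cpow_inv_two_im_eq_sqrt] <;> norm_num [abs_of_pos]
  rw [branchShift, hdisc, hroot, hk']
  constructor
  · simp
  · simp [neg_div]

theorem norm_lamM_sub_modelRoot_le {k : ℤ} (hk : k ≠ 0) : ‖lamM k - modelRoot k‖ ≤ 9 / 4 := by
  have hdiff : lamM k - modelRoot k = branchShift k - 1 / 4 := by
    rw [lamM_eq, modelRoot_eq]
    ring
  have hquarter : ‖(1 / 4 : ℂ)‖ = 1 / 4 := by norm_num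
  rw [hdiff]
  linarith [norm_sub_le (branchShift k) (1 / 4), norm_branchShift_le_two hk]

theorem sq_div_two_le_norm_lamM (k : ℤ) : (k : ℝ) ^ 2 / 2 ≤ ‖lamM k‖ :=
  calc (k : ℝ) ^ 2 / 2 ≤ -(lamM k).re := by
        rw [re_lamM]
        linarith [re_branchShift_le k]
    _ ≤ |(lamM k).re| := neg_le_abs _
    _ ≤ ‖lamM k‖ := Complex.abs_re_le_norm _

theorem abs_re_branchShift_le_two {k : ℤ} (hk : k ≠ 0) : |(branchShift k).re| ≤ 2 :=
  (Complex.abs_re_le_norm _).trans (norm_branchShift_le_two hk)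

theorem abs_sub_re_branchShift_le_norm_lamP_sub_lamM (k j : ℤ) :
    |(j : ℝ) ^ 2 - (branchShift j).re - (branchShift k).re| ≤ ‖lamP k - lamM j‖ := by
  refine (congrArg abs ?_).trans_le (Complex.abs_re_le_norm (lamP k - lamM j))
  rw [Complex.sub_re, re_lamP, re_lamM]
  ring

theorem abs_sub_im_branchShift_le_norm_lamP_sub_lamM (k j : ℤ) :
    |(k : ℝ) - j - (branchShift k).im - (branchShift j).im| ≤ ‖lamP k - lamM j‖ := by
  refine (congrArg abs ?_).trans_le (Complex.abs_im_le_norm (lamP k - lamM j))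
  rw [Complex.sub_im, im_lamP, im_lamM]
  ring

theorem sq_div_four_le_norm_lamP_sub_lamM_of_abs_eq_one {k j : ℤ} (hk : |k| = 1) (hj : j ≠ 0) :
    (j : ℝ) ^ 2 / 4 ≤ ‖lamP k - lamM j‖ := by
  obtain ⟨hkre, hkim⟩ := branchShift_of_abs_eq_one hk
  rcases (Int.one_le_abs hj).eq_or_lt' with hj₁ | hj₂
  · obtain ⟨-, hjim⟩ := branchShift_of_abs_eq_one hj₁
    have hj₁' : (j : ℝ) ^ 2 = 1 := by exact_mod_cast (by rw [← sq_abs, hj₁, one_pow] : j ^ 2 = 1)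
    have hle_sqrt : 1 ≤ √3 := one_le_sqrt.mpr (by norm_num)
    have hsqrt_le : √3 ≤ 7 / 4 := sqrt_le_iff.mpr ⟨by norm_num, by norm_num⟩
    refine le_trans ?_ (abs_sub_im_branchShift_le_norm_lamP_sub_lamM k j)
    rw [hkim, hjim, hj₁', le_abs]
    rcases eq_or_eq_neg_of_abs_eq hk with rfl | rfl <;>
      rcases eq_or_eq_neg_of_abs_eq hj₁ with rfl | rfl <;> push_cast
    · exact .inl (by linarith)
    · exact .inl (by linarith)
    · exact .inr (by linarith)
    · exact .inl (by linarith)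
  · have hj₂' : (4 : ℝ) ≤ (j : ℝ) ^ 2 := by
      exact_mod_cast (by nlinarith [sq_abs j] : 4 ≤ j ^ 2)
    refine le_trans ?_ ((le_abs_self _).trans (abs_sub_re_branchShift_le_norm_lamP_sub_lamM k j))
    linarith [le_of_abs_le (abs_re_branchShift_le_two hj)]

theorem sq_div_four_le_norm_lamP_sub_lamM_of_three_le_abs {k j : ℤ} (hk : 3 ≤ |k|) (hj : j ≠ 0) :
    (j : ℝ) ^ 2 / 4 ≤ ‖lamP k - lamM j‖ := by
  have hk₀ : k ≠ 0 := by rintro rfl; simp at hk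
  obtain ⟨hkim, hkre⟩ := branchShift_of_two_le_abs (hk.trans' (by norm_num))
  have hre := abs_sub_re_branchShift_le_norm_lamP_sub_lamM k j
  have him := abs_sub_im_branchShift_le_norm_lamP_sub_lamM k j
  obtain hj₁ | hj₂ | hj₃ : |j| = 1 ∨ |j| = 2 ∨ 3 ≤ |j| := by
    have := Int.one_le_abs hj
    lia
  · have hj' : (j : ℝ) ^ 2 = 1 := by exact_mod_cast (by rw [← sq_abs, hj₁, one_pow] : j ^ 2 = 1)
    refine le_trans ?_ ((neg_le_abs _).trans hre)
    rw [hj', (branchShift_of_abs_eq_one hj₁).1]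
    linarith
  · have hj' : (j : ℝ) ^ 2 = 4 := by exact_mod_cast (by rw [← sq_abs, hj₂]; rfl : j ^ 2 = 4)
    rw [hkim, (branchShift_of_two_le_abs hj₂.ge).1, sub_zero, sub_zero] at him
    have hgap : (1 : ℝ) ≤ |(k : ℝ) - j| := by
      exact_mod_cast Int.one_le_abs (sub_ne_zero.mpr (by rintro rfl; lia))
    linarith
  · have hj' : (9 : ℝ) ≤ (j : ℝ) ^ 2 := by
      exact_mod_cast (by nlinarith [sq_abs j] : 9 ≤ j ^ 2)
    refine le_trans ?_ ((le_abs_self _).trans hre)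
    linarith [le_of_abs_le (abs_re_branchShift_le_two hj),
      le_of_abs_le (abs_re_branchShift_le_two hk₀)]

theorem abs_eq_one_or_three_le_abs {k : ℤ} (hk₀ : k ≠ 0) (hk₂ : k ≠ 2) (hk₂' : k ≠ -2) :
    |k| = 1 ∨ 3 ≤ |k| := by
  rcases abs_cases k with h | h <;> lia

theorem sq_div_four_le_norm_lamP_sub_lamM {k j : ℤ} (hk₀ : k ≠ 0) (hk₂ : k ≠ 2) (hk₂' : k ≠ -2)
    (hj : j ≠ 0) : (j : ℝ) ^ 2 / 4 ≤ ‖lamP k - lamM j‖ := by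
  obtain hk | hk := abs_eq_one_or_three_le_abs hk₀ hk₂ hk₂'
  · exact sq_div_four_le_norm_lamP_sub_lamM_of_abs_eq_one hk hj
  · exact sq_div_four_le_norm_lamP_sub_lamM_of_three_le_abs hk hj

theorem lamP_mul_lamM (k : ℤ) : lamP k * lamM k = -(Complex.I * (k : ℂ) ^ 3) := by
  rw [lamP_eq, lamM_eq]
  linear_combination branchShift_mul_sq_sub k + (k : ℂ) ^ 2 * Complex.I_sq

theorem lamP_ne_zero {k : ℤ} (hk : k ≠ 0) : lamP k ≠ 0 := by
  refine left_ne_zero_of_mul (b := lamM k) ?_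
  rw [lamP_mul_lamM]
  exact neg_ne_zero.mpr (mul_ne_zero Complex.I_ne_zero (pow_ne_zero 3 (Int.cast_ne_zero.mpr hk)))

theorem sq_div_four_le_norm_lamM (k : ℤ) : (k : ℝ) ^ 2 / 4 ≤ ‖lamM k‖ := by
  linarith [sq_div_two_le_norm_lamM k, sq_nonneg (k : ℝ)]

theorem sq_div_four_le_norm_modelRoot (k : ℤ) : (k : ℝ) ^ 2 / 4 ≤ ‖modelRoot k‖ := by
  rw [norm_modelRoot]
  linarith [sq_nonneg (k : ℝ)]

theorem exists_norm_canonicalProd_lamM_le : ∃ K > 0, ∀ z w : ℂ,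
    (∀ k : ℤ, k ≠ 0 → (k : ℝ) ^ 2 / 4 ≤ ‖modelRoot k - w‖) →
    (∀ k : ℤ, k ≠ 0 → ‖lamM k - z‖ ≤ ‖modelRoot k - w‖ + 3) →
    ‖canonicalProd (fun k : {k : ℤ // k ≠ 0} => lamM k) z‖ ≤
      K * ‖canonicalProd (fun k : {k : ℤ // k ≠ 0} => modelRoot k) w‖ := by
  refine ⟨_, exp_pos _, fun z w hw hzw => norm_canonicalProd_le_of_norm_sub_le
    (d := 3) (fun k => ?_) (summable_inv_int_sq_div 4) (by norm_num)
    (fun k => sq_div_four_le_norm_lamM k) (fun k => sq_div_four_le_norm_modelRoot k)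
    (fun k => hw k k.2) (fun k => ?_) fun k => hzw k k.2⟩
  · have := k.2
    positivity
  · exact norm_le_norm_add_const_of_dist_le
      ((dist_eq_norm' _ _).trans_le ((norm_lamM_sub_modelRoot_le k.2).trans (by norm_num)))

theorem exists_norm_canonicalProd_modelRoot_le : ∃ K > 0, ∀ w : ℂ,
    (∀ k : ℤ, k ≠ 0 → (k : ℝ) ^ 2 / 4 ≤ ‖lamM k - w‖) →
    ‖canonicalProd (fun k : {k : ℤ // k ≠ 0} => modelRoot k) w‖ ≤
      K * ‖canonicalProd (fun k : {k : ℤ // k ≠ 0} => lamM k) w‖ := by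
  refine ⟨_, exp_pos _, fun w hw => norm_canonicalProd_le_of_norm_sub_le
    (d := 3) (fun k => ?_) (summable_inv_int_sq_div 4) (by norm_num)
    (fun k => sq_div_four_le_norm_modelRoot k) (fun k => sq_div_four_le_norm_lamM k)
    (fun k => hw k k.2) (fun k => ?_) fun k => ?_⟩
  · have := k.2
    positivity
  · exact norm_le_norm_add_const_of_dist_le
      ((dist_eq_norm _ _).trans_le ((norm_lamM_sub_modelRoot_le k.2).trans (by norm_num)))
  · refine norm_le_norm_add_const_of_dist_le ?_
    rw [dist_eq_norm', sub_sub_sub_cancel_right]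
    exact (norm_lamM_sub_modelRoot_le k.2).trans (by norm_num)

theorem summable_inv_norm_lamM : Summable fun k : {k : ℤ // k ≠ 0} => ‖lamM k‖⁻¹ := by
  refine (summable_inv_int_sq_div 4).of_nonneg_of_le (fun k => by positivity) fun k => ?_
  have := k.2
  gcongr
  exact sq_div_four_le_norm_lamM k

theorem one_add_div_I_mul (z a : ℂ) : 1 + z / (Complex.I * a) = 1 - Complex.I * z / a := by
  rw [← div_div, Complex.div_I, neg_div, mul_comm z, sub_eq_add_neg]

theorem multipliable_P₂ (z : ℂ) :
    Multipliable fun k : {k : ℤ // k ≠ 0} => 1 + z / (Complex.I * lamM k) := by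
  simpa only [one_add_div_I_mul] using
    (hasProd_canonicalProd summable_inv_norm_lamM (Complex.I * z)).multipliable

theorem P₂_eq (z : ℂ) :
    P₂ z = z * canonicalProd (fun k : {k : ℤ // k ≠ 0} => lamM k) (Complex.I * z) := by
  simp only [P₂, canonicalProd, one_add_div_I_mul]

theorem differentiable_P₂ : Differentiable ℂ P₂ := by
  have h := differentiable_canonicalProd summable_inv_norm_lamM
  rw [funext P₂_eq]
  fun_prop

theorem P₂_lamP (k : ℤ) : P₂ (-(Complex.I * lamP k)) = -(Complex.I * lamP k) *
    canonicalProd (fun k : {k : ℤ // k ≠ 0} => lamM k) (lamP k) := by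
  rw [P₂_eq, mul_neg, ← mul_assoc, Complex.I_mul_I, neg_one_mul, neg_neg]

theorem P₂_lamP_ne_zero {k : ℤ} (hk₀ : k ≠ 0) (hk₂ : k ≠ 2) (hk₂' : k ≠ -2) :
    P₂ (-(Complex.I * lamP k)) ≠ 0 := by
  rw [P₂_lamP]
  refine mul_ne_zero (neg_ne_zero.mpr (mul_ne_zero Complex.I_ne_zero (lamP_ne_zero hk₀)))
    (canonicalProd_ne_zero summable_inv_norm_lamM fun j h => ?_)
  have hpos : (0 : ℝ) < (j : ℝ) ^ 2 / 4 := by have := j.2; positivity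
  have hle := sq_div_four_le_norm_lamP_sub_lamM hk₀ hk₂ hk₂' j.2
  rw [h, sub_self, norm_zero] at hle
  exact hpos.not_ge hle

theorem one_le_intCast_sq {k : ℤ} (hk : k ≠ 0) : (1 : ℝ) ≤ (k : ℝ) ^ 2 := by
  rw [one_le_sq_iff_one_le_abs]
  exact_mod_cast Int.one_le_abs hk

theorem add_sq_sub_le_norm_modelRoot_sub (k : ℤ) (w : ℂ) :
    w.re + (k : ℝ) ^ 2 - 1 / 4 ≤ ‖modelRoot k - w‖ := by
  refine le_trans ?_ ((neg_le_abs _).trans (Complex.abs_re_le_norm _))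
  have hre : (modelRoot k - w).re = 1 / 4 - (k : ℝ) ^ 2 - w.re := by
    simp [modelRoot_eq, re_intCast_sq, neg_add_eq_sub]
  rw [hre]
  linarith

theorem exists_norm_P₂_le : ∃ C > 0, ∀ z s : ℂ, ‖s ^ 2‖ = ‖z‖ → 0 ≤ (s ^ 2).re →
    (∀ k : ℤ, k ≠ 0 → ‖lamM k - Complex.I * z‖ ≤ ‖modelRoot k - s ^ 2‖ + 3) →
    ‖P₂ z‖ ≤ C * rexp (2 * π * |s.re|) := by
  obtain ⟨K, hK, hcompare⟩ := exists_norm_canonicalProd_lamM_le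
  obtain ⟨M, hM⟩ := (isCompact_closedBall (0 : ℂ) 1).exists_bound_of_continuousOn
    differentiable_P₂.continuous.continuousOn
  refine ⟨max M (K * rexp π), lt_max_of_lt_right (by positivity), fun z s hsz hs hzs => ?_⟩
  rcases le_total ‖z‖ 1 with hz | hz
  · calc ‖P₂ z‖ ≤ M := hM z (mem_closedBall_zero_iff.mpr hz)
      _ ≤ max M (K * rexp π) * rexp (2 * π * |s.re|) :=
        (le_max_left _ _).trans <| le_mul_of_one_le_right
          (le_max_of_le_right (by positivity)) (one_le_exp (by positivity))
  · have hfactor : ‖z‖ ≤ ‖1 - 4 * s ^ 2‖ := by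
      have h := norm_sub_norm_le (4 * s ^ 2) 1
      rw [norm_sub_rev, norm_mul, norm_one, Complex.norm_ofNat] at h
      linarith
    have hsep (k : ℤ) (hk : k ≠ 0) : (k : ℝ) ^ 2 / 4 ≤ ‖modelRoot k - s ^ 2‖ := by
      linarith [one_le_intCast_sq hk, add_sq_sub_le_norm_modelRoot_sub k (s ^ 2)]
    calc ‖P₂ z‖
        ≤ ‖1 - 4 * s ^ 2‖ *
            (K * ‖canonicalProd (fun k : {k : ℤ // k ≠ 0} => modelRoot k) (s ^ 2)‖) := by
          rw [P₂_eq, norm_mul]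
          gcongr
          exact hcompare _ _ hsep hzs
      _ = K * ‖canonicalProd modelRoot (s ^ 2)‖ := by
          rw [← one_sub_four_mul_canonicalProd_modelRoot, norm_mul]
          ring
      _ ≤ K * (rexp π * rexp (2 * π * |s.re|)) := by
          gcongr
          exact norm_canonicalProd_modelRoot_sq_le s
      _ ≤ max M (K * rexp π) * rexp (2 * π * |s.re|) := by
          rw [← mul_assoc]
          gcongr
          exact le_max_right _ _

theorem exists_norm_P₂_le_exp_sqrt_norm :
    ∃ C > 0, ∀ z, ‖P₂ z‖ ≤ C * rexp (2 * π * √‖z‖) := by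
  obtain ⟨C, hC, hle⟩ := exists_norm_P₂_le
  refine ⟨C, hC, fun z => ?_⟩
  have hsq : ((√‖z‖ : ℝ) : ℂ) ^ 2 = ‖z‖ := by rw [← Complex.ofReal_pow, sq_sqrt (norm_nonneg z)]
  have h := hle z (√‖z‖ : ℝ) (by simp [hsq]) (by simp [hsq]) fun k hk => ?_
  · rwa [Complex.ofReal_re, abs_of_nonneg (sqrt_nonneg _)] at h
  rw [hsq]
  calc ‖lamM k - Complex.I * z‖
      ≤ ‖lamM k‖ + ‖z‖ := by
        refine (norm_sub_le _ _).trans_eq ?_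
        rw [norm_mul, Complex.norm_I, one_mul]
    _ ≤ ‖modelRoot k‖ + 9 / 4 + ‖z‖ := by
        gcongr
        exact norm_le_norm_add_const_of_dist_le
          ((dist_eq_norm _ _).trans_le (norm_lamM_sub_modelRoot_le hk))
    _ ≤ ‖modelRoot k - ‖z‖‖ + 3 := by
        have h := add_sq_sub_le_norm_modelRoot_sub k ‖z‖
        rw [Complex.ofReal_re] at h
        linarith [norm_modelRoot k]

theorem two_mul_sqrt_div_two (x : ℝ) : 2 * √(x / 2) = √2 * √x := by
  rw [sqrt_div' x zero_le_two, ← mul_div_assoc, mul_div_right_comm, div_sqrt]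

theorem exists_norm_P₂_ofReal_le :
    ∃ C > 0, ∀ x : ℝ, ‖P₂ x‖ ≤ C * rexp (√2 * π * √|x|) := by
  obtain ⟨C, hC, hle⟩ := exists_norm_P₂_le
  refine ⟨C, hC, fun x => ?_⟩
  have hsq : ((Complex.I * x) ^ (2⁻¹ : ℂ)) ^ 2 = Complex.I * x := by simp
  have hre : ((Complex.I * x) ^ (2⁻¹ : ℂ)).re = √(|x| / 2) := by simp [Complex.cpow_inv_two_re]
  have hexp : 2 * π * √(|x| / 2) = √2 * π * √|x| := by
    linear_combination π * two_mul_sqrt_div_two |x|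
  have h := hle x ((Complex.I * x) ^ (2⁻¹ : ℂ)) (by simp [hsq]) (by simp [hsq]) fun k hk => ?_
  · rwa [hre, abs_of_nonneg (sqrt_nonneg _), hexp] at h
  rw [hsq]
  calc ‖lamM k - Complex.I * x‖
      ≤ ‖modelRoot k - Complex.I * x‖ + ‖lamM k - modelRoot k‖ := by
        rw [add_comm]
        exact norm_sub_le_norm_sub_add_norm_sub _ _ _
    _ ≤ ‖modelRoot k - Complex.I * x‖ + 3 := by
        gcongr
        linarith [norm_lamM_sub_modelRoot_le hk]

theorem sqrt_one_add_le_one_add_sqrt {x : ℝ} (hx : 0 ≤ x) : √(1 + x) ≤ 1 + √x := by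
  refine sqrt_le_iff.mpr ⟨by positivity, ?_⟩
  rw [add_sq, sq_sqrt hx]
  linarith [sqrt_nonneg x]

theorem abs_le_norm_lamP {k : ℤ} (hk : 2 ≤ |k|) : |(k : ℝ)| ≤ ‖lamP k‖ := by
  have him := Complex.abs_im_le_norm (lamP k)
  rwa [im_lamP, (branchShift_of_two_le_abs hk).1, sub_zero] at him

theorem abs_sub_two_le_norm_add_re_lamP {k : ℤ} (hk : 2 ≤ |k|) :
    |(k : ℝ)| - 2 ≤ ‖lamP k‖ + (lamP k).re := by
  have hk₀ : k ≠ 0 := by rintro rfl; simp at hk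
  rw [re_lamP]
  linarith [abs_le_norm_lamP hk, le_of_abs_le (abs_re_branchShift_le_two hk₀)]

theorem exp_sqrt_abs_le {k : ℤ} (hk : 2 ≤ |k|) : rexp (√2 * π * √|(k : ℝ)|) ≤
    rexp (2 * π) * rexp (2 * π * (lamP k ^ (2⁻¹ : ℂ)).re) := by
  have hsqrt : √(|(k : ℝ)| / 2) ≤ 1 + (lamP k ^ (2⁻¹ : ℂ)).re := by
    have hk' : (2 : ℝ) ≤ |(k : ℝ)| := by exact_mod_cast hk
    have hle := abs_sub_two_le_norm_add_re_lamP hk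
    rw [Complex.cpow_inv_two_re]
    refine (sqrt_le_sqrt ?_).trans (sqrt_one_add_le_one_add_sqrt ?_) <;> linarith
  rw [← exp_add, exp_le_exp]
  calc √2 * π * √|(k : ℝ)| = 2 * π * √(|(k : ℝ)| / 2) := by
        linear_combination -π * two_mul_sqrt_div_two |(k : ℝ)|
    _ ≤ 2 * π * (1 + (lamP k ^ (2⁻¹ : ℂ)).re) := by gcongr
    _ = 2 * π + 2 * π * (lamP k ^ (2⁻¹ : ℂ)).re := by ring

theorem exists_le_norm_P₂_lamP_of_three_le_abs : ∃ c > 0, ∀ k : ℤ, 3 ≤ |k| →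
    c * rexp (√2 * π * √|(k : ℝ)|) ≤ ‖P₂ (-(Complex.I * lamP k))‖ := by
  obtain ⟨K, hK, hcompare⟩ := exists_norm_canonicalProd_modelRoot_le
  refine ⟨(20 * K * rexp π * rexp (2 * π))⁻¹, by positivity, fun k hk => ?_⟩
  have hk₂ : 2 ≤ |k| := hk.trans' (by norm_num)
  have hk' : (3 : ℝ) ≤ |(k : ℝ)| := by exact_mod_cast hk
  have hfactor : ‖1 - 4 * lamP k‖ ≤ 5 * ‖lamP k‖ := by
    have h := norm_sub_le 1 (4 * lamP k)
    rw [norm_mul, norm_one, Complex.norm_ofNat] at h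
    linarith [abs_le_norm_lamP hk₂]
  have hre : 7 / 10 ≤ (lamP k ^ (2⁻¹ : ℂ)).re := by
    rw [Complex.cpow_inv_two_re]
    exact le_sqrt_of_sq_le (by linarith [abs_sub_two_le_norm_add_re_lamP hk₂])
  have hlower := le_norm_canonicalProd_modelRoot_sq hre
  rw [show (lamP k ^ (2⁻¹ : ℂ)) ^ 2 = lamP k by simp, div_le_iff₀ (by positivity)] at hlower
  have hmodel : ‖canonicalProd modelRoot (lamP k)‖ ≤
      5 * K * ‖P₂ (-(Complex.I * lamP k))‖ := by
    calc ‖canonicalProd modelRoot (lamP k)‖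
        ≤ 5 * ‖lamP k‖ * (K * ‖canonicalProd (fun j : {j : ℤ // j ≠ 0} => lamM j) (lamP k)‖) := by
          rw [← one_sub_four_mul_canonicalProd_modelRoot, norm_mul]
          gcongr
          exact hcompare _ fun j hj => by
            rw [norm_sub_rev]
            exact sq_div_four_le_norm_lamP_sub_lamM_of_three_le_abs hk hj
      _ = 5 * K * ‖P₂ (-(Complex.I * lamP k))‖ := by
          rw [P₂_lamP, norm_mul, norm_neg, norm_mul, Complex.norm_I]
          ring
  rw [inv_mul_le_iff₀ (by positivity)]
  calc rexp (√2 * π * √|(k : ℝ)|)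
      ≤ rexp (2 * π) * rexp (2 * π * (lamP k ^ (2⁻¹ : ℂ)).re) := exp_sqrt_abs_le hk₂
    _ ≤ rexp (2 * π) * (‖canonicalProd modelRoot (lamP k)‖ * (4 * rexp π)) := by
        gcongr
    _ ≤ rexp (2 * π) * (5 * K * ‖P₂ (-(Complex.I * lamP k))‖ * (4 * rexp π)) := by gcongr
    _ = 20 * K * rexp π * rexp (2 * π) * ‖P₂ (-(Complex.I * lamP k))‖ := by ring

theorem exists_le_norm_P₂_lamP : ∃ c > 0, ∀ k : ℤ, k ≠ 0 → k ≠ 2 → k ≠ -2 →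
    c * rexp (√2 * π * √|(k : ℝ)|) ≤ ‖P₂ (-(Complex.I * lamP k))‖ := by
  obtain ⟨c, hc, hlarge⟩ := exists_le_norm_P₂_lamP_of_three_le_abs
  let value (k : ℤ) : ℝ := ‖P₂ (-(Complex.I * lamP k))‖ / rexp (√2 * π * √|(k : ℝ)|)
  have hvalue {k : ℤ} (hk₀ : k ≠ 0) (hk₂ : k ≠ 2) (hk₂' : k ≠ -2) : 0 < value k :=
    div_pos (norm_pos_iff.mpr (P₂_lamP_ne_zero hk₀ hk₂ hk₂')) (exp_pos _)
  have hone : 0 < value 1 := hvalue (by decide) (by decide) (by decide)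
  have hneg_one : 0 < value (-1) := hvalue (by decide) (by decide) (by decide)
  refine ⟨min c (min (value 1) (value (-1))), lt_min hc (lt_min hone hneg_one),
    fun k hk₀ hk₂ hk₂' => ?_⟩
  rw [← le_div_iff₀ (exp_pos _)]
  obtain hk | hk := abs_eq_one_or_three_le_abs hk₀ hk₂ hk₂'
  · rcases eq_or_eq_neg_of_abs_eq hk with rfl | rfl
    · exact (min_le_right _ _).trans (min_le_left _ _)
    · exact (min_le_right _ _).trans (min_le_right _ _)
  · exact (min_le_left _ _).trans ((le_div_iff₀ (exp_pos _)).mpr (hlarge k hk))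

/-- **Estimates on the canonical product `P₂` over the parabolic branch:** the product
converges, `P₂` is entire with `|P₂(z)| ≤ C e^{2π√|z|}` on ℂ, `|P₂(x)| ≤ C e^{√2 π √|x|}`
on ℝ, and `|P₂(-iλ_k⁺)| ≥ c e^{√2 π √|k|}` for `k ∉ {0, ±2}`. -/
theorem parabolic_canonical_product_estimates :
    (∀ z : ℂ, Multipliable (fun k : {k : ℤ // k ≠ 0} => 1 + z / (Complex.I * lamM k.1))) ∧
    Differentiable ℂ P₂ ∧
    ∃ C > (0:ℝ), ∃ c > (0:ℝ),
      -- (a) global growth bound of order 1/2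
      (∀ z : ℂ, ‖P₂ z‖ ≤ C * Real.exp (2 * π * Real.sqrt ‖z‖)) ∧
      -- (b) growth bound on the real axis
      (∀ x : ℝ, ‖P₂ (x:ℂ)‖ ≤ C * Real.exp (Real.sqrt 2 * π * Real.sqrt |x|)) ∧
      -- (c) lower bound at the points -iλ_k⁺
      (∀ k : ℤ, k ≠ 0 → k ≠ 2 → k ≠ -2 →
        c * Real.exp (Real.sqrt 2 * π * Real.sqrt |(k:ℝ)|)
          ≤ ‖P₂ (-(Complex.I * lamP k))‖) := by
  obtain ⟨C₁, hC₁, hglobal⟩ := exists_norm_P₂_le_exp_sqrt_norm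
  obtain ⟨C₂, -, hreal⟩ := exists_norm_P₂_ofReal_le
  obtain ⟨c, hc, hlower⟩ := exists_le_norm_P₂_lamP
  refine ⟨multipliable_P₂, differentiable_P₂, max C₁ C₂, lt_max_of_lt_left hC₁, c, hc,
    fun z => (hglobal z).trans ?_, fun x => (hreal x).trans ?_, hlower⟩
  · gcongr
    exact le_max_left C₁ C₂
  · gcongr
    exact le_max_right C₁ C₂
end
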